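/- arXiv:1802.02172 — 4 statements merged into one kernel-verified Lean document; each statement's English description precedes it below -/
import Mathlib

section
/- For every c ∈ (1, 1.05) there exists a positive integer N(c) such that for every integer n > N(c), every positive integer M ≤ cⁿ, and every choice of points x₁, …, x_M in the unit ball 𝔹ₙ ⊂ ℝⁿ, the n-dimensional Lebesgue measure of the convex hull of {x₁, …, x_M} is less than (3·√(ln c))ⁿ · Vₙ(𝔹ₙ). -/
/-!
The proof is Maurey's empirical method. Every point `p` of the convex hull of points of the unit
ball lies within `1 / √k` of the average of some `k` of these points (repetitions allowed):
`exists_sum_sub_norm_sq_le`. Hence the hull of `M` points is covered by `M ^ k` balls of radius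
`1 / √k`, and its volume is at most `M ^ k * (1 / √k) ^ n` times that of the unit ball
(`volume_convexHull_le`).

For `M ≤ c ^ n` the factor is at most `(c ^ k / √k) ^ n`. With `L = log c`, the choice
`k = ⌈1 / (2 L)⌉` makes `c ^ (2 k) ≤ exp (1 + 2 L) ≤ exp 1.1 < 4.5 ≤ 9 L k`, that is
`c ^ k / √k < 3 √L`. The estimate holds in every positive dimension.
-/

open MeasureTheory Metric

/-- Greedy form of Maurey's lemma: the points are chosen one at a time, each keeping the increase
of the squared norm of the accumulated deviation from `p` at most `1`. Such a choice exists because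
an affine majorant of the increase is at most `1` at `p`, hence at some point of the set. -/
lemma exists_sum_sub_norm_sq_le {E ι : Type*} [NormedAddCommGroup E] [InnerProductSpace ℝ E]
    (x : ι → E) (hx : ∀ i, ‖x i‖ ≤ 1) (p : E) (hp : p ∈ convexHull ℝ (Set.range x)) (k : ℕ) :
    ∃ f : Fin k → ι, ‖∑ j, (x (f j) - p)‖ ^ 2 ≤ k := by
  induction k with
  | zero => exact ⟨Fin.elim0, by simp⟩
  | succ k ih =>
    obtain ⟨f, hf⟩ := ih
    set S := ∑ j, (x (f j) - p) with hS
    -- the part of the increase that depends linearly on the new point is `2 ⟪S - p, ·⟫`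
    have hconc : ConcaveOn ℝ (convexHull ℝ (Set.range x)) (fun y => inner ℝ (S - p) y) :=
      ((innerSL ℝ (S - p)).toLinearMap.concaveOn (convex_convexHull ℝ _))
    obtain ⟨_, ⟨i, rfl⟩, hi⟩ :=
      hconc.exists_le_of_mem_convexHull (subset_convexHull ℝ _) hp
    refine ⟨Fin.cons i f, ?_⟩
    rw [Fin.sum_univ_succ]
    simp only [Fin.cons_zero, Fin.cons_succ, ← hS]
    have h1 : ‖x i‖ ^ 2 ≤ 1 := by
      have := hx i
      have := norm_nonneg (x i)
      nlinarith
    have e1 := norm_add_sq_real (x i - p) S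
    have e2 := norm_sub_sq_real (x i) p
    simp only [inner_sub_left, real_inner_self_eq_norm_sq] at hi e1
    rw [real_inner_comm S (x i), real_inner_comm S p] at e1
    rw [real_inner_comm p (x i)] at e2
    push_cast
    nlinarith [sq_nonneg ‖p‖]

lemma volume_convexHull_le {n M : ℕ} (x : Fin M → EuclideanSpace ℝ (Fin n))
    (hx : ∀ i, ‖x i‖ ≤ 1) (k : ℕ) (hk : 0 < k) :
    volume (convexHull ℝ (Set.range x)) ≤
      ENNReal.ofReal ((M : ℝ) ^ k * (1 / √(k : ℝ)) ^ n) *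
        volume (closedBall (0 : EuclideanSpace ℝ (Fin n)) 1) := by
  have hk' : (0 : ℝ) < k := by exact_mod_cast hk
  have hsub : convexHull ℝ (Set.range x) ⊆
      ⋃ f : Fin k → Fin M, closedBall ((k : ℝ)⁻¹ • ∑ j, x (f j)) (1 / √(k : ℝ)) := by
    intro p hp
    obtain ⟨f, hf⟩ := exists_sum_sub_norm_sq_le x hx p hp k
    refine Set.mem_iUnion.2 ⟨f, ?_⟩
    rw [mem_closedBall, dist_comm, dist_eq_norm]
    have e : (k : ℝ)⁻¹ • ∑ j, x (f j) - p = (k : ℝ)⁻¹ • ∑ j, (x (f j) - p) := by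
      rw [Finset.sum_sub_distrib, smul_sub]
      simp only [Finset.sum_const, Finset.card_univ, Fintype.card_fin]
      rw [← Nat.cast_smul_eq_nsmul ℝ, smul_smul, inv_mul_cancel₀ hk'.ne', one_smul]
    rw [e, norm_smul, norm_inv, Real.norm_natCast]
    calc (k : ℝ)⁻¹ * ‖∑ j, (x (f j) - p)‖ ≤ (k : ℝ)⁻¹ * √(k : ℝ) := by
          gcongr
          exact Real.le_sqrt_of_sq_le hf
      _ = 1 / √(k : ℝ) := by
          rw [inv_mul_eq_div, Real.sqrt_div_self']
  refine (measure_mono hsub).trans ((measure_iUnion_fintype_le _ _).trans (le_of_eq ?_))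
  have hb : ∀ f : Fin k → Fin M,
      volume (closedBall ((k : ℝ)⁻¹ • ∑ j, x (f j)) (1 / √(k : ℝ))) =
        ENNReal.ofReal ((1 / √(k : ℝ)) ^ n) *
          volume (closedBall (0 : EuclideanSpace ℝ (Fin n)) 1) := by
    intro f
    rw [Measure.addHaar_closedBall' _ _ (by positivity), finrank_euclideanSpace_fin]
  simp only [hb, Finset.sum_const, Finset.card_univ, Fintype.card_fun, Fintype.card_fin,
    nsmul_eq_mul]
  rw [ENNReal.ofReal_mul (by positivity), mul_assoc, ENNReal.ofReal_pow (by positivity)]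
  simp

/-- The choice of `k`: the nearest integer above the minimiser `1 / (2 log c)` of `c ^ k / √k`. -/
lemma exists_pow_div_sqrt_lt (c : ℝ) (hc1 : 1 < c) (hc2 : c < 1.05) :
    ∃ k : ℕ, 0 < k ∧ c ^ k * (1 / √(k : ℝ)) < 3 * √(Real.log c) := by
  have hL : 0 < Real.log c := Real.log_pos hc1
  have hL2 : Real.log c ≤ 0.05 := by
    have := Real.log_le_sub_one_of_pos (by linarith : 0 < c)
    linarith
  set L := Real.log c with hLdef
  have hpos : 0 < 1 / (2 * L) := by positivity
  refine ⟨⌈1 / (2 * L)⌉₊, Nat.ceil_pos.2 hpos, ?_⟩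
  have h1 : 1 / (2 * L) ≤ (⌈1 / (2 * L)⌉₊ : ℝ) := Nat.le_ceil _
  have h2 : (⌈1 / (2 * L)⌉₊ : ℝ) < 1 / (2 * L) + 1 := Nat.ceil_lt_add_one hpos.le
  set k := ⌈1 / (2 * L)⌉₊
  have hk : (0 : ℝ) < k := hpos.trans_le h1
  rw [div_le_iff₀ (by positivity)] at h1
  have h3 : k * (2 * L) ≤ 1.1 := by
    have e : (1 / (2 * L) + 1) * (2 * L) = 1 + 2 * L := by field_simp
    have := mul_le_mul_of_nonneg_right h2.le (by positivity : 0 ≤ 2 * L)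
    linarith
  have h4 : (c ^ k) ^ 2 ≤ Real.exp 1.1 := by
    have e : (c ^ k) ^ 2 = Real.exp (k * (2 * L)) := by
      rw [show (k : ℝ) * (2 * L) = ((k * 2 : ℕ) : ℝ) * L by push_cast; ring, Real.exp_nat_mul,
        hLdef, Real.exp_log (by linarith), pow_mul]
    rw [e]
    exact Real.exp_le_exp.2 h3
  have h5 : Real.exp 1.1 < 4.5 := by
    have a := Real.exp_one_lt_d9
    have b : Real.exp 0.1 ≤ 1 / (1 - 0.1) :=
      Real.exp_bound_div_one_sub_of_interval (by norm_num) (by norm_num)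
    rw [show (1.1 : ℝ) = 1 + 0.1 by norm_num, Real.exp_add]
    have := Real.exp_pos 0.1
    norm_num at a b ⊢
    nlinarith
  rw [mul_one_div, div_lt_iff₀ (Real.sqrt_pos.2 hk)]
  refine lt_of_pow_lt_pow_left₀ 2 (by positivity) ?_
  rw [mul_pow, mul_pow, Real.sq_sqrt hL.le, Real.sq_sqrt hk.le]
  nlinarith

theorem stmt_2 (c : ℝ) (hc1 : 1 < c) (hc2 : c < 1.05) :
    ∃ N : ℕ, ∀ n : ℕ, N < n → ∀ M : ℕ, 0 < M → (M : ℝ) ≤ c ^ n →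
      ∀ x : Fin M → EuclideanSpace ℝ (Fin n),
        (∀ i, x i ∈ closedBall (0 : EuclideanSpace ℝ (Fin n)) 1) →
        volume (convexHull ℝ (Set.range x)) <
          ENNReal.ofReal ((3 * Real.sqrt (Real.log c)) ^ n) *
            volume (closedBall (0 : EuclideanSpace ℝ (Fin n)) 1) := by
  refine ⟨0, fun n hn M _ hM x hx => ?_⟩
  obtain ⟨k, hk, hlt⟩ := exists_pow_div_sqrt_lt c hc1 hc2
  have hc0 : 0 < c := by linarith
  refine (volume_convexHull_le x (fun i => by simpa using hx i) k hk).trans_lt ?_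
  refine (ENNReal.mul_lt_mul_iff_left (measure_closedBall_pos _ _ one_pos).ne'
    measure_closedBall_lt_top.ne).2 ?_
  have hr : (M : ℝ) ^ k * (1 / √(k : ℝ)) ^ n < (3 * √(Real.log c)) ^ n := by
    calc (M : ℝ) ^ k * (1 / √(k : ℝ)) ^ n ≤ (c ^ n) ^ k * (1 / √(k : ℝ)) ^ n := by gcongr
      _ = (c ^ k * (1 / √(k : ℝ))) ^ n := by rw [mul_pow, ← pow_mul, ← pow_mul, mul_comm n k]
      _ < (3 * √(Real.log c)) ^ n := pow_lt_pow_left₀ hlt (by positivity) hn.ne'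
  exact (ENNReal.ofReal_lt_ofReal_iff (lt_of_le_of_lt (by positivity) hr)).2 hr
end

section
/- Let B₂ > 0 and let {Pₙ, n = 1,2,…} be a family of probability measures, where Pₙ has an isotropic log-concave density on ℝⁿ which is ψ₂ with the same constant B₂ for every n. Then the family {Pₙ} has exponential Fisher separability. -/
/-!
The pair `x, y` violates `(x,x) > (x,y)` only if `‖x‖ ≤ ε√n`, or if `y` lies in the half-space
`(x,y) ≥ ‖x‖²` for some `‖x‖ > ε√n`. The `ψ₂` hypothesis gives a subgaussian Laplace transform
`E exp (x,v) ≤ exp (K‖v‖²)` (`psi_two_laplace`), so the second event has exponentially small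
probability by Chernoff's bound (`measure_halfSpace_le`). What remains is the exponential
small-ball estimate `P(‖x‖ ≤ ε√n) ≤ C exp (-cn)` for a small constant `ε`
(`MidPL.small_ball`).

For the latter, the measure `μ` is multiplied by a log-concave Gaussian factor: for a direction `y`
and a small constant `t`, put `k(x,y) = exp (√t (x,y) - t‖x‖²/2)`. As `μ` satisfies the
Prékopa–Leindler inequality (`MidPL`), the strongly log-concave measure `k(·,y) μ` concentrates:
with `S = {‖x‖ ≤ ε√n}`, `T = {‖x‖ ≥ √n/2}`, `d = √n/2 - ε√n` and `L_A(y) = ∫_A k(x,y) dμ(x)`,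
the parallelogram identity gives `L_S L_T ≤ exp (-td²/4) L²` (`MidPL.tilt_ball`).

It remains to find `y` for which `L_T` is not much smaller than `L²` and `‖y‖ = O(√n)`. For a
standard Gaussian `y`, `E L_T(y) = μ(T)`, which is bounded below by a Paley–Zygmund argument
(`measure_norm_ge`), while `E L(y)² = E exp (t (x,x')) ≤ exp (4K²t²n)` with `x'` an independent
copy of `x`, and `E exp (‖y‖²/4) L(y) ≤ exp (O(n))`. Averaging produces such a `y`
(`exists_good_tilt`), with `L_T ≥ const · exp (-4K²t²n) L²`, so `L_S` is at most a constant times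
`exp (4K²t²n - td²/4)`. The gain `td²/4` is linear in `t` and the loss quadratic, so `t` small
makes the exponent negative, and `ε` small makes the comparison of `L_S(y)` with `μ(S)` harmless.

Prékopa–Leindler is proved here by the classical route: Brunn–Minkowski on the line, level sets,
and induction on the dimension through products.
-/

open MeasureTheory ProbabilityTheory Metric
open scoped RealInnerProductSpace ENNReal

/-- A density `ρ` on `ℝⁿ` is log-concave if `{ρ > 0}` is convex and `-log ρ` is
convex on this set. -/
def IsLogConcaveDensity {n : ℕ} (ρ : EuclideanSpace ℝ (Fin n) → ℝ) : Prop :=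
  Convex ℝ {z | 0 < ρ z} ∧ ConvexOn ℝ {z | 0 < ρ z} (fun z => -Real.log (ρ z))

/-- A density `ρ` on `ℝⁿ` is isotropic if it has zero mean and unit variance in
every direction. -/
def IsIsotropicDensity {n : ℕ} (ρ : EuclideanSpace ℝ (Fin n) → ℝ) : Prop :=
  (∫ z, ρ z • z) = 0 ∧
    ∀ θ : EuclideanSpace ℝ (Fin n), ‖θ‖ = 1 → (∫ z, ρ z * ⟪z, θ⟫ ^ 2) = 1

/-- A density `ρ` on `ℝⁿ` is `ψ_α` with constant `B` if
`(E|(x,θ)|^p)^(1/p) ≤ B p^(1/α) (E|(x,θ)|²)^(1/2)` for all unit `θ` and `p ≥ 2`. -/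
def IsPsiAlphaDensity {n : ℕ} (α B : ℝ) (ρ : EuclideanSpace ℝ (Fin n) → ℝ) : Prop :=
  ∀ θ : EuclideanSpace ℝ (Fin n), ‖θ‖ = 1 → ∀ p : ℝ, 2 ≤ p →
    (∫ z, ρ z * |⟪z, θ⟫| ^ p) ^ (1 / p) ≤
      B * p ^ (1 / α) * (∫ z, ρ z * ⟪z, θ⟫ ^ 2) ^ ((1 : ℝ) / 2)

/-- A family of probability measures `Pₙ` on `ℝⁿ` has exponential Fisher
separability if there are `a > 0`, `b ∈ (0,1)` such that for every `n`, for
independent `x, y` distributed according to `Pₙ`, the inequality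
`(x,x) > (x,y)` fails with probability at most `a·bⁿ`. -/
def ExpFisherSeparability (P : ∀ n : ℕ, Measure (EuclideanSpace ℝ (Fin n))) : Prop :=
  ∃ a > (0 : ℝ), ∃ b ∈ Set.Ioo (0 : ℝ) 1, ∀ n : ℕ,
    ((P n).prod (P n)) {p | ⟪p.1, p.1⟫ ≤ ⟪p.1, p.2⟫} ≤ ENNReal.ofReal (a * b ^ n)

/-! ### The Prékopa–Leindler inequality -/

/-- The one-dimensional Brunn–Minkowski inequality for midpoints. For compact `A` and `B`, the
translates `A + min B` and `B + max A` lie in `2 • C` and share at most one point. -/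
lemma volume_add_le_of_midpoint {A B C : Set ℝ} (hA : MeasurableSet A) (hB : MeasurableSet B)
    (hAn : A.Nonempty) (hBn : B.Nonempty)
    (h : ∀ a ∈ A, ∀ b ∈ B, (1 / 2 : ℝ) • (a + b) ∈ C) :
    volume A + volume B ≤ 2 * volume C := by
  have key : ∀ K ⊆ A, IsCompact K → ∀ L ⊆ B, IsCompact L → K.Nonempty → L.Nonempty →
      volume K + volume L ≤ 2 * volume C := by
    intro K hKA hK L hLB hL hKn hLn
    obtain ⟨a, haK, ha⟩ := hK.exists_isGreatest hKn
    obtain ⟨b, hbL, hb⟩ := hL.exists_isLeast hLn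
    have hC2 : volume ((fun z : ℝ => (1 / 2 : ℝ) * z) ⁻¹' C) = 2 * volume C := by
      rw [Real.volume_preimage_mul_left (by norm_num)]
      norm_num
    rw [← hC2]
    have h1 : volume K = volume ((fun z : ℝ => z + (-b)) ⁻¹' K) := by
      rw [measure_preimage_add_right]
    have h2 : volume L = volume ((fun z : ℝ => z + (-a)) ⁻¹' L) := by
      rw [measure_preimage_add_right]
    rw [h1, h2, ← measure_union₀]
    · apply measure_mono
      rintro z (hz | hz)
      · have := h _ (hKA hz) b (hLB hbL)
        simpa using this
      · have := h a (hKA haK) _ (hLB hz)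
        simpa using this
    · exact (hL.measurableSet.preimage (by fun_prop)).nullMeasurableSet
    · refine measure_mono_null (t := {a + b}) ?_ (by simp)
      rintro z ⟨hz1, hz2⟩
      have h3 := ha hz1
      have h4 := hb hz2
      simp only [Set.mem_singleton_iff]
      linarith
  obtain ⟨a0, ha0⟩ := hAn
  obtain ⟨b0, hb0⟩ := hBn
  rw [hA.measure_eq_iSup_isCompact, hB.measure_eq_iSup_isCompact]
  simp only [iSup_and']
  refine ENNReal.biSup_add_biSup_le' ⟨∅, by simp⟩ ⟨∅, by simp⟩ ?_
  rintro K ⟨hKA, hK⟩ L ⟨hLB, hL⟩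
  calc volume K + volume L ≤ volume (insert a0 K) + volume (insert b0 L) := by
        gcongr <;> exact Set.subset_insert _ _
    _ ≤ _ := key _ (Set.insert_subset ha0 hKA) (hK.insert a0) _ (Set.insert_subset hb0 hLB)
        (hL.insert b0) (Set.insert_nonempty _ _) (Set.insert_nonempty _ _)

/-- Prékopa–Leindler on the line for functions with supremum `1`: the level sets of `f` and `g` at
any height below `1` are nonempty, so one-dimensional Brunn–Minkowski applies to each of them. -/
lemma pl_real_normalized {f g h : ℝ → ℝ} (hf : Measurable f) (hg : Measurable g)
    (hh : Measurable h) (hf0 : ∀ x, 0 ≤ f x) (hg0 : ∀ x, 0 ≤ g x) (hh0 : ∀ x, 0 ≤ h x)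
    (hf1 : ∀ x, f x ≤ 1) (hg1 : ∀ x, g x ≤ 1)
    (hfs : ∀ s < 1, ∃ x, s < f x) (hgs : ∀ s < 1, ∃ x, s < g x)
    (H : ∀ x z, f x * g z ≤ h ((1 / 2 : ℝ) • (x + z)) ^ 2) :
    (∫⁻ x, ENNReal.ofReal (f x)) + (∫⁻ x, ENNReal.ofReal (g x)) ≤
      2 * ∫⁻ x, ENNReal.ofReal (h x) := by
  rw [lintegral_eq_lintegral_meas_lt _ (.of_forall hf0) hf.aemeasurable,
    lintegral_eq_lintegral_meas_lt _ (.of_forall hg0) hg.aemeasurable,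
    lintegral_eq_lintegral_meas_lt _ (.of_forall hh0) hh.aemeasurable]
  have hm : ∀ u : ℝ → ℝ, Measurable fun t : ℝ => volume {a | t < u a} := fun u =>
    Antitone.measurable fun s t hst => measure_mono fun x hx => lt_of_le_of_lt hst hx
  rw [← lintegral_add_left (hm f), ← lintegral_const_mul _ (hm h)]
  refine setLIntegral_mono' measurableSet_Ioi fun s hs => ?_
  rcases lt_or_ge s 1 with hs1 | hs1
  · refine volume_add_le_of_midpoint (measurableSet_lt measurable_const hf)
      (measurableSet_lt measurable_const hg) (hfs s hs1) (hgs s hs1) ?_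
    intro a ha b hb
    have hs' : (0 : ℝ) < s := hs
    have := H a b
    simp only [Set.mem_ofPred_eq] at *
    by_contra hcon
    push Not at hcon
    nlinarith [hh0 ((1 / 2 : ℝ) • (a + b)), mul_lt_mul'' ha hb hs'.le hs'.le]
  · have e1 : {a | s < f a} = ∅ := by
      ext x; simp; exact (hf1 x).trans hs1
    have e2 : {a | s < g a} = ∅ := by
      ext x; simp; exact (hg1 x).trans hs1
    simp [e1, e2]

lemma ennreal_four_mul_le (x y : ℝ≥0∞) : 4 * (x * y) ≤ (x + y) ^ 2 := by
  rcases eq_or_ne x ⊤ with rfl | hx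
  · simp
  rcases eq_or_ne y ⊤ with rfl | hy
  · simp
  lift x to NNReal using hx
  lift y to NNReal using hy
  norm_cast
  rw [← NNReal.coe_le_coe]
  push_cast
  nlinarith [sq_nonneg ((x : ℝ) - y)]

/-- The Prékopa–Leindler property of a measure, for the parameter `1 / 2`, stated for
`ℝ≥0∞`-valued functions and squared so that no square root is needed. -/
def MidPL {E : Type*} [AddCommGroup E] [Module ℝ E] [MeasurableSpace E] (μ : Measure E) : Prop :=
  ∀ F G H : E → ℝ≥0∞, Measurable F → Measurable G → Measurable H →
    (∀ x z, F x * G z ≤ H ((1 / 2 : ℝ) • (x + z)) ^ 2) →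
    (∫⁻ x, F x ∂μ) * (∫⁻ x, G x ∂μ) ≤ (∫⁻ x, H x ∂μ) ^ 2

/-- Prékopa–Leindler on the line for bounded functions, by rescaling to supremum `1` and the
inequality between arithmetic and geometric means. -/
lemma pl_bounded {f g h : ℝ → ℝ} (hf : Measurable f) (hg : Measurable g)
    (hh : Measurable h) (hf0 : ∀ x, 0 ≤ f x) (hg0 : ∀ x, 0 ≤ g x) (hh0 : ∀ x, 0 ≤ h x)
    {M : ℝ} (hf1 : ∀ x, f x ≤ M) (hg1 : ∀ x, g x ≤ M)
    (H : ∀ x z, f x * g z ≤ h ((1 / 2 : ℝ) • (x + z)) ^ 2) :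
    (∫⁻ x, ENNReal.ofReal (f x)) * (∫⁻ x, ENNReal.ofReal (g x)) ≤
      (∫⁻ x, ENNReal.ofReal (h x)) ^ 2 := by
  have bf : BddAbove (Set.range f) := ⟨M, by rintro _ ⟨x, rfl⟩; exact hf1 x⟩
  have bg : BddAbove (Set.range g) := ⟨M, by rintro _ ⟨x, rfl⟩; exact hg1 x⟩
  set a := ⨆ x, f x with ha
  set b := ⨆ x, g x with hb
  have hfa : ∀ x, f x ≤ a := fun x => le_ciSup bf x
  have hgb : ∀ x, g x ≤ b := fun x => le_ciSup bg x
  rcases (Real.iSup_nonneg hf0).eq_or_lt with ha0 | ha0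
  · have : ∀ x, f x = 0 := fun x => le_antisymm ((hfa x).trans_eq ha0.symm) (hf0 x)
    simp [this]
  rcases (Real.iSup_nonneg hg0).eq_or_lt with hb0 | hb0
  · have : ∀ x, g x = 0 := fun x => le_antisymm ((hgb x).trans_eq hb0.symm) (hg0 x)
    simp [this]
  rw [← ha] at ha0
  rw [← hb] at hb0
  have hab : 0 < Real.sqrt (a * b) := Real.sqrt_pos.2 (mul_pos ha0 hb0)
  have key := pl_real_normalized (f := fun x => f x / a) (g := fun x => g x / b)
    (h := fun x => h x / Real.sqrt (a * b)) (hf.div_const _) (hg.div_const _) (hh.div_const _)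
    (fun x => div_nonneg (hf0 x) ha0.le) (fun x => div_nonneg (hg0 x) hb0.le)
    (fun x => div_nonneg (hh0 x) hab.le)
    (fun x => (div_le_one ha0).2 (hfa x)) (fun x => (div_le_one hb0).2 (hgb x))
    (fun s hs => by
      obtain ⟨x, hx⟩ := exists_lt_of_lt_ciSup (f := f) (b := s * a) (by rw [← ha]; nlinarith)
      exact ⟨x, (lt_div_iff₀ ha0).2 hx⟩)
    (fun s hs => by
      obtain ⟨x, hx⟩ := exists_lt_of_lt_ciSup (f := g) (b := s * b) (by rw [← hb]; nlinarith)
      exact ⟨x, (lt_div_iff₀ hb0).2 hx⟩)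
    (fun x z => by
      rw [div_pow, Real.sq_sqrt (mul_pos ha0 hb0).le, div_mul_div_comm]
      exact div_le_div_of_nonneg_right (H x z) (mul_pos ha0 hb0).le)
  have scale : ∀ (u : ℝ → ℝ) (c : ℝ), 0 < c → Measurable u →
      ∫⁻ x, ENNReal.ofReal (u x) = ENNReal.ofReal c * ∫⁻ x, ENNReal.ofReal (u x / c) := by
    intro u c hc hu
    rw [← lintegral_const_mul _ (by fun_prop)]
    congr 1 with x
    rw [← ENNReal.ofReal_mul hc.le]
    congr 1
    field_simp
  rw [scale f a ha0 hf, scale g b hb0 hg, scale h _ hab hh]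
  set I := ∫⁻ x, ENNReal.ofReal (f x / a)
  set J := ∫⁻ x, ENNReal.ofReal (g x / b)
  set T := ∫⁻ x, ENNReal.ofReal (h x / Real.sqrt (a * b))
  have h4 : 4 * (I * J) ≤ 4 * T ^ 2 := by
    calc 4 * (I * J) ≤ (I + J) ^ 2 := ennreal_four_mul_le _ _
      _ ≤ (2 * T) ^ 2 := by gcongr
      _ = 4 * T ^ 2 := by ring
  have h5 : I * J ≤ T ^ 2 := (ENNReal.mul_le_mul_iff_right (by norm_num) (by norm_num)).1 h4
  calc ENNReal.ofReal a * I * (ENNReal.ofReal b * J)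
      = ENNReal.ofReal (a * b) * (I * J) := by rw [ENNReal.ofReal_mul ha0.le]; ring
    _ ≤ ENNReal.ofReal (a * b) * T ^ 2 := by gcongr
    _ = _ := by
      rw [mul_pow, ← ENNReal.ofReal_pow hab.le, Real.sq_sqrt (mul_pos ha0 hb0).le]

/-- Lebesgue measure on the line has the Prékopa–Leindler property, by truncation to bounded
functions. -/
lemma midPL_real : MidPL (volume : Measure ℝ) := by
  intro F G H hF hG hH hFG
  have trunc : ∀ u : ℝ → ℝ≥0∞, Measurable u → ∀ x, u x = ⨆ k : ℕ, min (u x) (k : ℝ≥0∞) := by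
    intro u _ x
    rw [← inf_iSup_eq, ENNReal.iSup_natCast, inf_top_eq]
  have key : ∀ k : ℕ, (∫⁻ x, min (F x) k) * (∫⁻ x, min (G x) k) ≤ (∫⁻ x, H x) ^ 2 := by
    intro k
    have hfin : ∀ c : ℝ≥0∞, min c k ≠ ⊤ := fun c =>
      ne_top_of_le_ne_top (ENNReal.natCast_ne_top k) (min_le_right _ _)
    have conv : ∀ u : ℝ → ℝ≥0∞, ∫⁻ x, min (u x) k = ∫⁻ x, ENNReal.ofReal (min (u x) k).toReal :=
      fun u => by
        congr 1 with x
        rw [ENNReal.ofReal_toReal (hfin _)]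
    have hk : ∀ c : ℝ≥0∞, (min c k).toReal ≤ k := fun c => by
      have := ENNReal.toReal_mono (ENNReal.natCast_ne_top k) (min_le_right c (k : ℝ≥0∞))
      simpa using this
    calc (∫⁻ x, min (F x) k) * (∫⁻ x, min (G x) k) ≤ (∫⁻ x, min (H x) k) ^ 2 := by
          rw [conv F, conv G, conv H]
          refine pl_bounded (M := k) (by fun_prop) (by fun_prop) (by fun_prop)
            (fun _ => ENNReal.toReal_nonneg) (fun _ => ENNReal.toReal_nonneg)
            (fun _ => ENNReal.toReal_nonneg) (fun x => hk _) (fun x => hk _) ?_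
          intro x z
          rw [← ENNReal.toReal_mul, ← ENNReal.toReal_pow]
          refine ENNReal.toReal_mono (ENNReal.pow_ne_top (hfin _)) ?_
          rcases le_total (H ((1 / 2 : ℝ) • (x + z))) k with h | h
          · rw [min_eq_left h]
            exact le_trans (mul_le_mul' (min_le_left _ _) (min_le_left _ _)) (hFG x z)
          · rw [min_eq_right h, sq]
            exact mul_le_mul' (min_le_right _ _) (min_le_right _ _)
      _ ≤ _ := by
          gcongr
          exact min_le_left _ _
  have mono : ∀ u : ℝ → ℝ≥0∞, Monotone fun (k : ℕ) (x : ℝ) => min (u x) (k : ℝ≥0∞) :=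
    fun u i j hij x => min_le_min_left _ (by exact_mod_cast hij)
  have hsup : ∀ u : ℝ → ℝ≥0∞, Measurable u → ∫⁻ x, u x = ⨆ k : ℕ, ∫⁻ x, min (u x) k := by
    intro u hu
    rw [← lintegral_iSup (fun k => by fun_prop) (mono u)]
    congr 1 with x
    exact trunc u hu x
  rw [hsup F hF, hsup G hG]
  have mI : ∀ u : ℝ → ℝ≥0∞, Monotone fun k : ℕ => ∫⁻ x, min (u x) (k : ℝ≥0∞) :=
    fun u i j hij => lintegral_mono (mono u hij)
  rw [ENNReal.iSup_mul]
  refine iSup_le fun i => ?_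
  rw [ENNReal.mul_iSup]
  refine iSup_le fun j => ?_
  exact le_trans (mul_le_mul' (mI F (le_max_left i j)) (mI G (le_max_right i j))) (key _)

lemma MidPL.prod {E E' : Type*} [AddCommGroup E] [Module ℝ E] [MeasurableSpace E]
    [AddCommGroup E'] [Module ℝ E'] [MeasurableSpace E'] {μ : Measure E} {ν : Measure E'}
    [SFinite μ] [SFinite ν] (hμ : MidPL μ) (hν : MidPL ν) : MidPL (μ.prod ν) := by
  intro F G H hF hG hH h
  rw [lintegral_prod _ hF.aemeasurable, lintegral_prod _ hG.aemeasurable,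
    lintegral_prod _ hH.aemeasurable]
  refine hμ _ _ _ hF.lintegral_prod_right' hG.lintegral_prod_right' hH.lintegral_prod_right' ?_
  intro x z
  refine hν _ _ _ (hF.comp measurable_prodMk_left) (hG.comp measurable_prodMk_left)
    (hH.comp measurable_prodMk_left) ?_
  intro x' z'
  exact h (x, x') (z, z')

lemma MidPL.of_measurePreserving {E E' : Type*} [AddCommGroup E] [Module ℝ E] [MeasurableSpace E]
    [AddCommGroup E'] [Module ℝ E'] [MeasurableSpace E'] {μ : Measure E} {ν : Measure E'}
    (hμ : MidPL μ) (e : E → E') (he : MeasurePreserving e μ ν)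
    (hmid : ∀ x z, e ((1 / 2 : ℝ) • (x + z)) = (1 / 2 : ℝ) • (e x + e z)) : MidPL ν := by
  intro F G H hF hG hH h
  rw [← he.lintegral_comp hF, ← he.lintegral_comp hG, ← he.lintegral_comp hH]
  refine hμ _ _ _ (hF.comp he.measurable) (hG.comp he.measurable) (hH.comp he.measurable) ?_
  intro x z
  simp only [hmid]
  exact h _ _

lemma midPL_pi (n : ℕ) : MidPL (volume : Measure (Fin n → ℝ)) := by
  induction n with
  | zero =>
    intro F G H hF hG hH h
    simp only [volume_pi, Measure.pi_of_empty _ (0 : Fin 0 → ℝ), lintegral_dirac' _ hF,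
      lintegral_dirac' _ hG, lintegral_dirac' _ hH]
    have := h 0 0
    rwa [Subsingleton.elim ((1 / 2 : ℝ) • ((0 : Fin 0 → ℝ) + 0)) 0] at this
  | succ n ih =>
    refine (midPL_real.prod ih).of_measurePreserving _
      (volume_preserving_piFinSuccAbove (fun _ : Fin (n + 1) => ℝ) 0).symm ?_
    intro x z
    funext i
    refine Fin.cases ?_ (fun j => ?_) i <;> simp [MeasurableEquiv.piFinSuccAbove, mul_add]

lemma midPL_euclidean (n : ℕ) : MidPL (volume : Measure (EuclideanSpace ℝ (Fin n))) :=
  (midPL_pi n).of_measurePreserving _ (PiLp.volume_preserving_toLp (Fin n)) fun _ _ => rfl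

/-- The Prékopa–Leindler property is inherited by midpoint log-concave densities. -/
lemma MidPL.withDensity {E : Type*} [AddCommGroup E] [Module ℝ E] [MeasurableSpace E]
    {μ : Measure E} (hμ : MidPL μ) {f : E → ℝ≥0∞} (hf : Measurable f)
    (hfm : ∀ x z, f x * f z ≤ f ((1 / 2 : ℝ) • (x + z)) ^ 2) : MidPL (μ.withDensity f) := by
  intro F G H hF hG hH h
  rw [lintegral_withDensity_eq_lintegral_mul _ hf hF, lintegral_withDensity_eq_lintegral_mul _ hf hG,
    lintegral_withDensity_eq_lintegral_mul _ hf hH]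
  refine hμ _ _ _ (hf.mul hF) (hf.mul hG) (hf.mul hH) fun x z => ?_
  simp only [Pi.mul_apply]
  calc f x * F x * (f z * G z) = (f x * f z) * (F x * G z) := by ring
    _ ≤ f ((1 / 2 : ℝ) • (x + z)) ^ 2 * H ((1 / 2 : ℝ) • (x + z)) ^ 2 :=
        mul_le_mul' (hfm x z) (h x z)
    _ = _ := by ring

/-! ### Log-concave densities -/

/-- A log-concave density need not be measurable on the boundary of its support. Setting it to zero
off the interior of the support changes it only on a null set, and makes it measurable while
preserving midpoint log-concavity. -/
lemma exists_measurable_logConcave_version {n : ℕ} {ρ : EuclideanSpace ℝ (Fin n) → ℝ}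
    (h0 : ∀ z, 0 ≤ ρ z) (hlc : IsLogConcaveDensity ρ) :
    ∃ f : EuclideanSpace ℝ (Fin n) → ℝ, Measurable f ∧ f =ᵐ[volume] ρ ∧ (∀ z, 0 ≤ f z) ∧
      ∀ x z, f x * f z ≤ f ((1 / 2 : ℝ) • (x + z)) ^ 2 := by
  classical
  obtain ⟨hD, hconv⟩ := hlc
  set D := {z | 0 < ρ z} with hDdef
  have hpos : ∀ z ∈ interior D, 0 < ρ z := fun z hz => interior_subset (s := D) hz
  have hcont : ContinuousOn ρ (interior D) := by
    have h1 : ContinuousOn (fun z => Real.exp (-(-Real.log (ρ z)))) (interior D) :=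
      (hconv.continuousOn_interior.neg).rexp
    refine h1.congr fun z hz => ?_
    have : 0 < ρ z := hpos z hz
    simp [Real.exp_log this]
  refine ⟨(interior D).piecewise ρ 0, hcont.measurable_piecewise continuousOn_const
    isOpen_interior.measurableSet, ?_, ?_, ?_⟩
  · have hfr : volume (frontier D) = 0 := hD.addHaar_frontier volume
    have : ∀ᵐ z, z ∉ frontier D := measure_eq_zero_iff_ae_notMem.1 hfr
    filter_upwards [this] with z hz
    by_cases hzi : z ∈ interior D
    · simp [Set.piecewise, hzi]
    · have hzc : z ∉ D := fun h => hz ⟨subset_closure h, hzi⟩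
      have : ρ z = 0 := le_antisymm (not_lt.1 hzc) (h0 z)
      simp [Set.piecewise, hzi, this]
  · intro z
    by_cases hzi : z ∈ interior D <;> simp [Set.piecewise, hzi, h0]
  · intro x z
    by_cases hx : x ∈ interior D
    swap
    · simp only [Set.piecewise, hx, if_false, Pi.zero_apply, zero_mul]; positivity
    by_cases hz : z ∈ interior D
    swap
    · simp only [Set.piecewise, hz, if_false, Pi.zero_apply, mul_zero]; positivity
    have hm : (1 / 2 : ℝ) • (x + z) ∈ interior D := by
      rw [smul_add]
      exact hD.interior hx hz (by norm_num) (by norm_num) (by norm_num)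
    simp only [Set.piecewise, hx, hz, hm, if_true]
    have px : 0 < ρ x := hpos x hx
    have pz : 0 < ρ z := hpos z hz
    have pm : 0 < ρ ((1 / 2 : ℝ) • (x + z)) := hpos _ hm
    have := hconv.2 (interior_subset hx) (interior_subset hz)
      (show (0 : ℝ) ≤ 1 / 2 by norm_num) (show (0 : ℝ) ≤ 1 / 2 by norm_num) (by norm_num)
    rw [← smul_add] at this
    simp only [smul_eq_mul] at this
    rw [← Real.log_le_log_iff (mul_pos px pz) (by positivity), Real.log_mul px.ne' pz.ne',
      Real.log_pow]
    push_cast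
    linarith

/-- A measure with log-concave density has the Prékopa–Leindler property, and integrals against
it are integrals against the density. -/
lemma logConcave_transfer {n : ℕ} {ρ : EuclideanSpace ℝ (Fin n) → ℝ}
    {μ : Measure (EuclideanSpace ℝ (Fin n))}
    (h0 : ∀ z, 0 ≤ ρ z) (hlc : IsLogConcaveDensity ρ)
    (hμ : μ = volume.withDensity (fun z => ENNReal.ofReal (ρ z))) :
    MidPL μ ∧ ∀ {F : Type} [NormedAddCommGroup F] [NormedSpace ℝ F]
      (φ : EuclideanSpace ℝ (Fin n) → F), ∫ z, φ z ∂μ = ∫ z, ρ z • φ z := by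
  obtain ⟨f, hfm, hfρ, hf0, hmid⟩ := exists_measurable_logConcave_version h0 hlc
  have hμf : μ = volume.withDensity (fun z => ENNReal.ofReal (f z)) := by
    rw [hμ]
    refine withDensity_congr_ae ?_
    filter_upwards [hfρ] with z hz
    rw [hz]
  constructor
  · rw [hμf]
    refine (midPL_euclidean n).withDensity (by fun_prop) fun x z => ?_
    rw [← ENNReal.ofReal_mul (hf0 x), ← ENNReal.ofReal_pow (hf0 _)]
    exact ENNReal.ofReal_le_ofReal (hmid x z)
  · intro F _ _ φ
    rw [hμf, integral_withDensity_eq_integral_toReal_smul (by fun_prop) (by simp)]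
    refine integral_congr_ae ?_
    filter_upwards [hfρ] with z hz
    rw [ENNReal.toReal_ofReal (hf0 z), hz]

/-! ### Exponential tails of marginals -/

section

variable {n : ℕ}

/-- The tail function of a one-dimensional marginal is midpoint log-concave. -/
lemma MidPL.tail_midpoint {μ : Measure (EuclideanSpace ℝ (Fin n))} (hμ : MidPL μ)
    (θ : EuclideanSpace ℝ (Fin n)) (a b : ℝ) :
    μ {x | a ≤ ⟪x, θ⟫} * μ {x | b ≤ ⟪x, θ⟫} ≤ μ {x | (a + b) / 2 ≤ ⟪x, θ⟫} ^ 2 := by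
  have hm : ∀ s : ℝ, MeasurableSet {x : EuclideanSpace ℝ (Fin n) | s ≤ ⟪x, θ⟫} := fun s =>
    measurableSet_le measurable_const (by fun_prop)
  have := hμ ({x | a ≤ ⟪x, θ⟫}.indicator 1) ({x | b ≤ ⟪x, θ⟫}.indicator 1)
    ({x | (a + b) / 2 ≤ ⟪x, θ⟫}.indicator 1) (measurable_one.indicator (hm _))
    (measurable_one.indicator (hm _)) (measurable_one.indicator (hm _)) ?_
  · simpa only [lintegral_indicator_one (hm _)] using this
  intro x z
  by_cases hx : a ≤ ⟪x, θ⟫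
  swap
  · simp [Set.indicator, hx]
  by_cases hz : b ≤ ⟪z, θ⟫
  swap
  · simp [Set.indicator, hz]
  have : (a + b) / 2 ≤ ⟪(1 / 2 : ℝ) • (x + z), θ⟫ := by
    rw [real_inner_smul_left, inner_add_left]; linarith
  simp only [Set.indicator, Set.mem_ofPred_eq, hx, hz, this, if_true]
  simp

/-- Log-concavity of the tail together with its decay to `0` forces geometric decay along an
arithmetic progression: the ratios of consecutive values are nonincreasing. -/
lemma MidPL.exists_geometric_tail {μ : Measure (EuclideanSpace ℝ (Fin n))}
    [IsProbabilityMeasure μ] (hμ : MidPL μ) (θ : EuclideanSpace ℝ (Fin n)) :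
    ∃ h > (0 : ℝ), ∃ q : ℝ, 0 < q ∧ q < 1 ∧
      ∀ j : ℕ, μ {x | j * h ≤ ⟪x, θ⟫} ≤ ENNReal.ofReal q ^ j := by
  set N : ℝ → ℝ≥0∞ := fun s => μ {x | s ≤ ⟪x, θ⟫} with hN
  have hm : ∀ s : ℝ, MeasurableSet {x : EuclideanSpace ℝ (Fin n) | s ≤ ⟪x, θ⟫} := fun s =>
    measurableSet_le measurable_const (by fun_prop)
  have anti : ∀ s t, s ≤ t → N t ≤ N s := fun s t hst =>
    measure_mono fun x hx => le_trans hst hx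
  have hlim : Filter.Tendsto (fun k : ℕ => N (k + 1)) Filter.atTop (nhds 0) := by
    have h1 := tendsto_measure_iInter_atTop (μ := μ)
      (s := fun k : ℕ => {x : EuclideanSpace ℝ (Fin n) | (k : ℝ) + 1 ≤ ⟪x, θ⟫})
      (fun k => (hm _).nullMeasurableSet)
      (fun i j hij x (hx : (j : ℝ) + 1 ≤ ⟪x, θ⟫) =>
        show (i : ℝ) + 1 ≤ ⟪x, θ⟫ from le_trans (by gcongr) hx) ⟨0, measure_ne_top _ _⟩
    have h2 : ⋂ k : ℕ, {x : EuclideanSpace ℝ (Fin n) | (k : ℝ) + 1 ≤ ⟪x, θ⟫} = ∅ := by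
      ext x
      simp only [Set.mem_iInter, Set.mem_ofPred_eq, Set.mem_empty_iff_false, iff_false, not_forall,
        not_le]
      obtain ⟨k, hk⟩ := exists_nat_gt ⟪x, θ⟫
      exact ⟨k, by linarith⟩
    rw [h2, measure_empty] at h1
    exact h1
  rcases eq_or_ne (N 0) 0 with h0 | h0
  · refine ⟨1, one_pos, 1 / 2, by norm_num, by norm_num, fun j => ?_⟩
    have : N (j * 1) ≤ N 0 := anti _ _ (by positivity)
    rw [h0] at this
    exact this.trans zero_le
  obtain ⟨k, hk⟩ := (hlim.eventually (gt_mem_nhds (pos_iff_ne_zero.2 h0))).exists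
  set h : ℝ := k + 1 with hh
  have hpos : 0 < h := by positivity
  set a : ℕ → ℝ := fun j => (N (j * h)).toReal with ha
  have hfin : ∀ s, N s ≠ ⊤ := fun s => measure_ne_top _ _
  have a0 : 0 < a 0 := by simpa [ha] using ENNReal.toReal_pos h0 (hfin 0)
  have a1 : a 1 < a 0 := by
    simp only [ha, Nat.cast_one, one_mul, Nat.cast_zero, zero_mul]
    exact (ENNReal.toReal_lt_toReal (hfin _) (hfin _)).2 hk
  have an : ∀ j, 0 ≤ a j := fun j => ENNReal.toReal_nonneg
  have amono : ∀ j, a (j + 1) ≤ a j := fun j =>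
    ENNReal.toReal_mono (hfin _) (anti _ _ (by push_cast; nlinarith))
  have amid : ∀ j, a j * a (j + 2) ≤ a (j + 1) ^ 2 := fun j => by
    have := hμ.tail_midpoint θ (j * h) ((j + 2 : ℕ) * h)
    rw [show ((j : ℝ) * h + ((j + 2 : ℕ) : ℝ) * h) / 2 = ((j + 1 : ℕ) : ℝ) * h by
      push_cast; ring] at this
    have h3 := ENNReal.toReal_mono (ENNReal.pow_ne_top (hfin _)) this
    rwa [ENNReal.toReal_mul, ENNReal.toReal_pow] at h3
  set q : ℝ := max (a 1 / a 0) (1 / 2) with hq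
  have hqpos : 0 < q := lt_of_lt_of_le (by norm_num) (le_max_right _ _)
  have ratio : ∀ j, a (j + 1) ≤ q * a j := by
    intro j
    induction j with
    | zero => exact (div_le_iff₀ a0).1 (le_max_left _ _)
    | succ j ih =>
      rcases (an j).eq_or_lt with hz | hz
      · have h1 := amono j
        have h2 := amono (j + 1)
        have h3 := an (j + 1)
        have : a (j + 1) = 0 := by linarith
        rw [this] at h2 ⊢
        simpa using h2
      · have h1 := amid j
        have h2 : a j * a (j + 2) ≤ a j * (q * a (j + 1)) := by
          nlinarith [mul_le_mul_of_nonneg_left ih (an (j + 1))]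
        exact le_of_mul_le_mul_left h2 hz
  have ale : ∀ j, a j ≤ q ^ j := by
    intro j
    induction j with
    | zero =>
      simp only [ha, pow_zero]
      exact ENNReal.toReal_le_of_le_ofReal zero_le_one (by simpa using prob_le_one)
    | succ j ih =>
      calc a (j + 1) ≤ q * a j := ratio j
        _ ≤ q * q ^ j := by gcongr
        _ = q ^ (j + 1) := by ring
  refine ⟨h, hpos, q, hqpos, max_lt ((div_lt_one a0).2 a1) (by norm_num), fun j => ?_⟩
  rw [← ENNReal.ofReal_pow hqpos.le]
  exact (ENNReal.le_ofReal_iff_toReal_le (hfin _) (by positivity)).2 (ale j)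

lemma MidPL.exists_exp_lintegral_ne_top {μ : Measure (EuclideanSpace ℝ (Fin n))}
    [IsProbabilityMeasure μ] (hμ : MidPL μ) (θ : EuclideanSpace ℝ (Fin n)) :
    ∃ κ > (0 : ℝ), ∫⁻ x, ENNReal.ofReal (Real.exp (κ * max 0 ⟪x, θ⟫)) ∂μ ≠ ⊤ := by
  obtain ⟨h, hh, q, hq0, hq1, htail⟩ := hμ.exists_geometric_tail θ
  have hm : ∀ s : ℝ, MeasurableSet {x : EuclideanSpace ℝ (Fin n) | s ≤ ⟪x, θ⟫} := fun s =>
    measurableSet_le measurable_const (by fun_prop)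
  set κ : ℝ := -Real.log q / (2 * h) with hκ
  have hlog : Real.log q < 0 := Real.log_neg hq0 hq1
  have hκ0 : 0 < κ := div_pos (by linarith) (by positivity)
  -- `e ^ (κ h) = q ^ (-1/2)`
  have hκh : κ * h = -Real.log q / 2 := by rw [hκ]; field_simp
  set r : ℝ := Real.exp (Real.log q / 2) with hr
  have hr1 : r < 1 := by rw [hr, Real.exp_lt_one_iff]; linarith
  refine ⟨κ, hκ0, ?_⟩
  have hpt : ∀ x : EuclideanSpace ℝ (Fin n), ENNReal.ofReal (Real.exp (κ * max 0 ⟪x, θ⟫)) ≤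
      1 + ∑' j : ℕ, {x | j * h ≤ ⟪x, θ⟫}.indicator
        (fun _ => ENNReal.ofReal (Real.exp (κ * (j + 1) * h))) x := by
    intro x
    rcases le_total ⟪x, θ⟫ 0 with hx | hx
    · rw [max_eq_left hx]; simp
    · rw [max_eq_right hx]
      refine le_trans ?_ (le_add_left (ENNReal.le_tsum ⌊⟪x, θ⟫ / h⌋₊))
      have h1 : (⌊⟪x, θ⟫ / h⌋₊ : ℝ) * h ≤ ⟪x, θ⟫ :=
        (le_div_iff₀ hh).1 (Nat.floor_le (div_nonneg hx hh.le))
      have h2 : ⟪x, θ⟫ < ((⌊⟪x, θ⟫ / h⌋₊ : ℝ) + 1) * h :=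
        (div_lt_iff₀ hh).1 (Nat.lt_floor_add_one _)
      rw [Set.indicator_of_mem (by exact h1)]
      refine ENNReal.ofReal_le_ofReal (Real.exp_le_exp.2 ?_)
      rw [mul_assoc]
      gcongr
  have hle : ∫⁻ x, ENNReal.ofReal (Real.exp (κ * max 0 ⟪x, θ⟫)) ∂μ ≤
      1 + ENNReal.ofReal (Real.exp (κ * h)) * (1 - ENNReal.ofReal r)⁻¹ := by
    refine (lintegral_mono hpt).trans ?_
    rw [lintegral_add_left measurable_const, lintegral_tsum
      (fun j => (measurable_const.indicator (hm _)).aemeasurable)]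
    simp only [lintegral_const, measure_univ, mul_one]
    gcongr
    rw [← ENNReal.tsum_geometric, ← ENNReal.tsum_mul_left]
    refine ENNReal.tsum_le_tsum fun j => ?_
    rw [lintegral_indicator_const (hm _)]
    refine (mul_le_mul_right (htail j) _).trans ?_
    rw [← ENNReal.ofReal_pow hq0.le, ← ENNReal.ofReal_pow (Real.exp_pos _).le,
      ← ENNReal.ofReal_mul (Real.exp_pos _).le, ← ENNReal.ofReal_mul (Real.exp_pos _).le]
    refine ENNReal.ofReal_le_ofReal (le_of_eq ?_)
    have hqe : q ^ j = Real.exp (j * Real.log q) := by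
      rw [Real.exp_nat_mul, Real.exp_log hq0]
    rw [hqe, ← Real.exp_nat_mul, ← Real.exp_add, ← Real.exp_add]
    congr 1
    linear_combination (j : ℝ) * hκh
  refine ne_top_of_le_ne_top ?_ hle
  refine ENNReal.add_ne_top.2 ⟨ENNReal.one_ne_top, ENNReal.mul_ne_top ENNReal.ofReal_ne_top ?_⟩
  rw [ENNReal.inv_ne_top]
  have : ENNReal.ofReal r < 1 := by simpa using hr1
  exact (tsub_pos_of_lt this).ne'

/-- All moments of the marginals are finite. This is what gives the moment hypotheses content, since
the Bochner integral of a non-integrable function is `0`. -/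
lemma MidPL.integrable_pow {μ : Measure (EuclideanSpace ℝ (Fin n))}
    [IsProbabilityMeasure μ] (hμ : MidPL μ) (θ : EuclideanSpace ℝ (Fin n)) (m : ℕ) :
    Integrable (fun x => |⟪x, θ⟫| ^ m) μ := by
  obtain ⟨κ, hκ, h1⟩ := hμ.exists_exp_lintegral_ne_top θ
  obtain ⟨κ', hκ', h2⟩ := hμ.exists_exp_lintegral_ne_top (-θ)
  have hi1 : Integrable (fun x => Real.exp (κ * max 0 ⟪x, θ⟫)) μ :=
    ⟨by fun_prop, by
      rw [hasFiniteIntegral_iff_ofReal (.of_forall fun _ => (Real.exp_pos _).le)]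
      exact lt_top_iff_ne_top.2 h1⟩
  have hi2 : Integrable (fun x => Real.exp (κ' * max 0 ⟪x, -θ⟫)) μ :=
    ⟨by fun_prop, by
      rw [hasFiniteIntegral_iff_ofReal (.of_forall fun _ => (Real.exp_pos _).le)]
      exact lt_top_iff_ne_top.2 h2⟩
  refine ((hi1.const_mul (m.factorial / κ ^ m)).add (hi2.const_mul (m.factorial / κ' ^ m))).mono'
    (by fun_prop) (.of_forall fun x => ?_)
  have bound : ∀ c > (0 : ℝ), ∀ u ≥ (0 : ℝ), u ^ m ≤ m.factorial / c ^ m * Real.exp (c * u) := by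
    intro c hc u hu
    have := Real.pow_div_factorial_le_exp (c * u) (by positivity) m
    rw [div_le_iff₀ (by positivity), mul_pow] at this
    rw [div_mul_eq_mul_div, le_div_iff₀ (by positivity)]
    linarith
  simp only [Pi.add_apply, Real.norm_eq_abs, abs_pow, abs_abs]
  rcases le_total 0 ⟪x, θ⟫ with hx | hx
  · rw [abs_of_nonneg hx]
    have := bound κ hκ _ hx
    rw [max_eq_right hx]
    have : 0 ≤ m.factorial / κ' ^ m * Real.exp (κ' * max 0 ⟪x, -θ⟫) := by positivity
    linarith
  · rw [abs_of_nonpos hx]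
    have := bound κ' hκ' _ (neg_nonneg.2 hx)
    rw [inner_neg_right, max_eq_right (neg_nonneg.2 hx)]
    have : 0 ≤ m.factorial / κ ^ m * Real.exp (κ * max 0 ⟪x, θ⟫) := by positivity
    linarith

end

/-! ### Subgaussian Laplace transform -/

section

variable {n : ℕ}

/-- The elementary inequality that turns a bound on `E exp (l² ξ²)` into one on `E exp (l ξ)` for
centred `ξ`. -/
lemma exp_le_add_exp_sq (x : ℝ) : Real.exp x ≤ x + Real.exp (x ^ 2) := by
  have h2 := Real.add_one_le_exp (x ^ 2)
  rcases le_or_gt |x| 1 with h | h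
  · have := (abs_le.1 (Real.abs_exp_sub_one_sub_id_le h)).2
    linarith
  · rcases lt_abs.1 h with h | h
    · have : Real.exp x ≤ Real.exp (x ^ 2) := Real.exp_le_exp.2 (by nlinarith)
      linarith
    · have : Real.exp x ≤ 1 := Real.exp_le_one_iff.2 (by linarith)
      nlinarith

/-- Expand the exponential and use `k ^ k / k! ≤ 3 ^ k` to dominate the series by a geometric one. -/
lemma lintegral_exp_sq_le {Ω : Type*} [MeasurableSpace Ω] {μ : Measure Ω} [IsProbabilityMeasure μ]
    {ξ : Ω → ℝ} (hξ : Measurable ξ) {B : ℝ} (hB : 0 < B)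
    (hmom : ∀ k : ℕ, 1 ≤ k → ∫⁻ x, ENNReal.ofReal (ξ x ^ (2 * k)) ∂μ ≤
      ENNReal.ofReal ((B ^ 2 * (2 * k)) ^ k))
    {c : ℝ} (hc : 0 ≤ c) (hc2 : 6 * B ^ 2 * c ≤ 1 / 2) :
    ∫⁻ x, ENNReal.ofReal (Real.exp (c * ξ x ^ 2)) ∂μ ≤
      ENNReal.ofReal (Real.exp (2 * (6 * B ^ 2 * c))) := by
  set u : ℝ := 6 * B ^ 2 * c with hu
  have hu0 : 0 ≤ u := by positivity
  have hexp : ∀ x, ENNReal.ofReal (Real.exp (c * ξ x ^ 2)) =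
      ∑' k : ℕ, ENNReal.ofReal (c ^ k / k.factorial) * ENNReal.ofReal (ξ x ^ (2 * k)) := by
    intro x
    have hs := NormedSpace.expSeries_div_hasSum_exp (𝔸 := ℝ) (c * ξ x ^ 2)
    rw [← Real.exp_eq_exp_ℝ] at hs
    rw [← hs.tsum_eq, ENNReal.ofReal_tsum_of_nonneg (fun k => by positivity) hs.summable]
    congr 1 with k
    rw [← ENNReal.ofReal_mul (by positivity)]
    congr 1
    rw [mul_pow, ← pow_mul]
    ring
  simp_rw [hexp]
  rw [lintegral_tsum (fun k => by fun_prop)]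
  have hterm : ∀ k : ℕ, ∫⁻ x, ENNReal.ofReal (c ^ k / k.factorial) *
      ENNReal.ofReal (ξ x ^ (2 * k)) ∂μ ≤ ENNReal.ofReal u ^ k := by
    intro k
    rw [lintegral_const_mul _ (by fun_prop)]
    rcases Nat.eq_zero_or_pos k with rfl | hk
    · simp
    · refine (mul_le_mul_right (hmom k hk) _).trans ?_
      rw [← ENNReal.ofReal_mul (by positivity), ← ENNReal.ofReal_pow hu0]
      refine ENNReal.ofReal_le_ofReal ?_
      have h1 : (k : ℝ) ^ k / k.factorial ≤ Real.exp 1 ^ k := by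
        rw [← Real.exp_nat_mul, mul_one]
        exact Real.pow_div_factorial_le_exp k (by positivity) k
      have h2 : Real.exp 1 ^ k ≤ 3 ^ k := by
        gcongr
        exact Real.exp_one_lt_three.le
      calc c ^ k / k.factorial * (B ^ 2 * (2 * k)) ^ k
          = (2 * B ^ 2 * c) ^ k * ((k : ℝ) ^ k / k.factorial) := by
            rw [mul_pow, mul_pow, mul_pow, mul_pow]; ring
        _ ≤ (2 * B ^ 2 * c) ^ k * 3 ^ k := by gcongr; exact h1.trans h2
        _ = u ^ k := by rw [← mul_pow, hu]; ring
  refine (ENNReal.tsum_le_tsum hterm).trans ?_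
  rw [ENNReal.tsum_geometric, ← ENNReal.ofReal_one, ← ENNReal.ofReal_sub _ hu0,
    ← ENNReal.ofReal_inv_of_pos (by linarith)]
  refine ENNReal.ofReal_le_ofReal ?_
  rw [inv_le_iff_one_le_mul₀ (by linarith)]
  have := Real.add_one_le_exp (2 * u)
  nlinarith

/-- A centred random variable with subgaussian moment growth has a subgaussian Laplace
transform. -/
lemma lintegral_exp_le {Ω : Type*} [MeasurableSpace Ω] {μ : Measure Ω} [IsProbabilityMeasure μ]
    {ξ : Ω → ℝ} (hξ : Measurable ξ) (hxint : Integrable ξ μ) (hmean : ∫ x, ξ x ∂μ = 0)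
    {B : ℝ} (hB : 0 < B)
    (hmom : ∀ k : ℕ, 1 ≤ k → ∫⁻ x, ENNReal.ofReal (ξ x ^ (2 * k)) ∂μ ≤
      ENNReal.ofReal ((B ^ 2 * (2 * k)) ^ k)) (l : ℝ) :
    ∫⁻ x, ENNReal.ofReal (Real.exp (l * ξ x)) ∂μ ≤
      ENNReal.ofReal (Real.exp (18 * B ^ 2 * l ^ 2)) := by
  rcases le_total (6 * B ^ 2 * l ^ 2) (1 / 2) with hl | hl
  · have h1 := lintegral_exp_sq_le hξ hB hmom (sq_nonneg l) hl
    have hi : Integrable (fun x => Real.exp (l ^ 2 * ξ x ^ 2)) μ :=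
      ⟨by fun_prop, by
        rw [hasFiniteIntegral_iff_ofReal (.of_forall fun _ => (Real.exp_pos _).le)]
        exact h1.trans_lt ENNReal.ofReal_lt_top⟩
    have hle : ∀ x, Real.exp (l * ξ x) ≤ l * ξ x + Real.exp (l ^ 2 * ξ x ^ 2) := fun x => by
      have := exp_le_add_exp_sq (l * ξ x)
      rwa [mul_pow] at this
    have hi2 : Integrable (fun x => l * ξ x + Real.exp (l ^ 2 * ξ x ^ 2)) μ :=
      (hxint.const_mul l).add hi
    calc ∫⁻ x, ENNReal.ofReal (Real.exp (l * ξ x)) ∂μ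
        ≤ ∫⁻ x, ENNReal.ofReal (l * ξ x + Real.exp (l ^ 2 * ξ x ^ 2)) ∂μ :=
          lintegral_mono fun x => ENNReal.ofReal_le_ofReal (hle x)
      _ = ENNReal.ofReal (∫ x, (l * ξ x + Real.exp (l ^ 2 * ξ x ^ 2)) ∂μ) :=
          (ofReal_integral_eq_lintegral_ofReal hi2
            (.of_forall fun x => (Real.exp_pos _).le.trans (hle x))).symm
      _ = ENNReal.ofReal (∫ x, Real.exp (l ^ 2 * ξ x ^ 2) ∂μ) := by
          rw [integral_add (hxint.const_mul l) hi, integral_const_mul, hmean, mul_zero, zero_add]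
      _ = ∫⁻ x, ENNReal.ofReal (Real.exp (l ^ 2 * ξ x ^ 2)) ∂μ :=
          ofReal_integral_eq_lintegral_ofReal hi (.of_forall fun x => (Real.exp_pos _).le)
      _ ≤ _ := h1.trans (ENNReal.ofReal_le_ofReal (Real.exp_le_exp.2 (by
          nlinarith [mul_nonneg (sq_nonneg B) (sq_nonneg l)])))
  -- `l ξ ≤ c ξ² + l² / (4 c)` with `c = 1 / (12 B²)`
  · have hc : (0 : ℝ) ≤ 1 / (12 * B ^ 2) := by positivity
    have h1 := lintegral_exp_sq_le hξ hB hmom hc (le_of_eq (by field_simp; norm_num))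
    have hle : ∀ x, ENNReal.ofReal (Real.exp (l * ξ x)) ≤
        ENNReal.ofReal (Real.exp (3 * B ^ 2 * l ^ 2)) *
          ENNReal.ofReal (Real.exp (1 / (12 * B ^ 2) * ξ x ^ 2)) := fun x => by
      rw [← ENNReal.ofReal_mul (Real.exp_pos _).le, ← Real.exp_add]
      refine ENNReal.ofReal_le_ofReal (Real.exp_le_exp.2 ?_)
      have : 3 * B ^ 2 * l ^ 2 + 1 / (12 * B ^ 2) * ξ x ^ 2 - l * ξ x =
          1 / (12 * B ^ 2) * (ξ x - 6 * B ^ 2 * l) ^ 2 := by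
        field_simp; ring
      have : 0 ≤ 1 / (12 * B ^ 2) * (ξ x - 6 * B ^ 2 * l) ^ 2 := by positivity
      linarith
    refine (lintegral_mono hle).trans ?_
    rw [lintegral_const_mul _ (by fun_prop)]
    refine (mul_le_mul_right h1 _).trans ?_
    rw [← ENNReal.ofReal_mul (Real.exp_pos _).le, ← Real.exp_add]
    refine ENNReal.ofReal_le_ofReal (Real.exp_le_exp.2 ?_)
    have : 2 * (6 * B ^ 2 * (1 / (12 * B ^ 2))) = 1 := by field_simp; norm_num
    rw [this]
    linarith

/-- The `ψ₂` hypothesis, read at the even exponents `p = 2 k` for unit vectors. -/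
lemma psi_two_moments {ρ : EuclideanSpace ℝ (Fin n) → ℝ}
    {μ : Measure (EuclideanSpace ℝ (Fin n))} [IsProbabilityMeasure μ] {B : ℝ}
    (hPL : MidPL μ) (htr : ∀ φ : EuclideanSpace ℝ (Fin n) → ℝ, ∫ z, φ z ∂μ = ∫ z, ρ z • φ z)
    (hiso : IsIsotropicDensity ρ) (hpsi : IsPsiAlphaDensity 2 B ρ)
    (θ : EuclideanSpace ℝ (Fin n)) (hθ : ‖θ‖ = 1) (k : ℕ) (hk : 1 ≤ k) :
    ∫⁻ x, ENNReal.ofReal (⟪x, θ⟫ ^ (2 * k)) ∂μ ≤ ENNReal.ofReal ((B ^ 2 * (2 * k)) ^ k) := by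
  have hk' : (1 : ℝ) ≤ k := by exact_mod_cast hk
  have hev : ∀ y : ℝ, |y| ^ (2 * k) = y ^ (2 * k) := fun y => by rw [pow_mul, sq_abs, ← pow_mul]
  have hi : Integrable (fun x => ⟪x, θ⟫ ^ (2 * k)) μ := by
    have := hPL.integrable_pow θ (2 * k)
    simpa only [hev] using this
  have hnn : ∀ x : EuclideanSpace ℝ (Fin n), 0 ≤ ⟪x, θ⟫ ^ (2 * k) := fun x => by
    rw [← hev]; positivity
  rw [← ofReal_integral_eq_lintegral_ofReal hi (.of_forall hnn)]
  refine ENNReal.ofReal_le_ofReal ?_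
  have h1 := hpsi θ hθ ((2 * k : ℕ) : ℝ) (by push_cast; linarith)
  rw [hiso.2 θ hθ, Real.one_rpow, mul_one] at h1
  simp only [Real.rpow_natCast, hev] at h1
  rw [← show ∫ z, ⟪z, θ⟫ ^ (2 * k) ∂μ = ∫ z, ρ z * ⟪z, θ⟫ ^ (2 * k) from htr _] at h1
  set I := ∫ z, ⟪z, θ⟫ ^ (2 * k) ∂μ
  have hI : 0 ≤ I := integral_nonneg hnn
  have h2 := pow_le_pow_left₀ (by positivity) h1 (2 * k)
  rw [← Real.rpow_natCast, ← Real.rpow_mul hI, one_div,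
    inv_mul_cancel₀ (by positivity), Real.rpow_one] at h2
  refine h2.trans (le_of_eq ?_)
  rw [pow_mul, mul_pow, ← Real.sqrt_eq_rpow, Real.sq_sqrt (by positivity)]
  push_cast
  rfl

/-- An isotropic `ψ₂` measure is subgaussian in every direction. -/
lemma psi_two_laplace {ρ : EuclideanSpace ℝ (Fin n) → ℝ}
    {μ : Measure (EuclideanSpace ℝ (Fin n))} [IsProbabilityMeasure μ] {B : ℝ} (hB : 0 < B)
    (hPL : MidPL μ) (htr : ∀ φ : EuclideanSpace ℝ (Fin n) → ℝ, ∫ z, φ z ∂μ = ∫ z, ρ z • φ z)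
    (htr' : ∫ z, z ∂μ = ∫ z, ρ z • z)
    (hiso : IsIsotropicDensity ρ) (hpsi : IsPsiAlphaDensity 2 B ρ)
    (v : EuclideanSpace ℝ (Fin n)) :
    ∫⁻ x, ENNReal.ofReal (Real.exp ⟪x, v⟫) ∂μ ≤
      ENNReal.ofReal (Real.exp (18 * B ^ 2 * ‖v‖ ^ 2)) := by
  rcases eq_or_ne v 0 with rfl | hv
  · simp
  have hv' : 0 < ‖v‖ := norm_pos_iff.2 hv
  set θ := ‖v‖⁻¹ • v with hθdef
  have hθ : ‖θ‖ = 1 := by rw [hθdef, norm_smul, norm_inv, norm_norm, inv_mul_cancel₀ hv'.ne']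
  have hint1 : ∀ w : EuclideanSpace ℝ (Fin n), Integrable (fun x => ⟪x, w⟫) μ := fun w => by
    have := hPL.integrable_pow w 1
    simp only [pow_one] at this
    exact (integrable_norm_iff (by fun_prop)).1 this
  have hxint : Integrable (fun x : EuclideanSpace ℝ (Fin n) => x) μ := by
    have h1 : Integrable (fun x : EuclideanSpace ℝ (Fin n) =>
        ∑ i, ⟪x, EuclideanSpace.basisFun (Fin n) ℝ i⟫ • EuclideanSpace.basisFun (Fin n) ℝ i) μ :=
      integrable_finsetSum _ fun i _ => (hint1 _).smul_const _
    refine h1.congr (.of_forall fun x => ?_)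
    have := (EuclideanSpace.basisFun (Fin n) ℝ).sum_repr' x
    simp only [real_inner_comm] at this ⊢
    exact this
  have hmean : ∫ x, ⟪x, θ⟫ ∂μ = 0 := by
    simp_rw [real_inner_comm θ]
    rw [integral_inner hxint, htr', hiso.1, inner_zero_right]
  have := lintegral_exp_le (μ := μ) (ξ := fun x => ⟪x, θ⟫) (by fun_prop) (hint1 θ) hmean hB
    (psi_two_moments hPL htr hiso hpsi θ hθ) ‖v‖
  convert this using 5 with x
  rw [hθdef, real_inner_smul_right]
  field_simp

end

/-! ### Gaussian integrals and the tilting kernel -/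

section

variable {n : ℕ}

/-- The standard Gaussian measure on `ℝⁿ`, given by its density. -/
noncomputable def gaussE (n : ℕ) : Measure (EuclideanSpace ℝ (Fin n)) :=
  volume.withDensity fun y =>
    ENNReal.ofReal (((2 * Real.pi) ^ ((n : ℝ) / 2))⁻¹ * Real.exp (-(1 / 2) * ‖y‖ ^ 2))

instance : SFinite (gaussE n) := by unfold gaussE; infer_instance

lemma lintegral_volume_exp {b : ℝ} (hb : 0 < b) (w : EuclideanSpace ℝ (Fin n)) :
    ∫⁻ y : EuclideanSpace ℝ (Fin n), ENNReal.ofReal (Real.exp (-b * ‖y‖ ^ 2 + ⟪w, y⟫)) =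
      ENNReal.ofReal ((Real.pi / b) ^ ((n : ℝ) / 2) * Real.exp (‖w‖ ^ 2 / (4 * b))) := by
  have hcast : ∀ y : EuclideanSpace ℝ (Fin n),
      Complex.exp (-(b : ℂ) * ‖y‖ ^ 2 + 1 * ⟪w, y⟫) =
        ((Real.exp (-b * ‖y‖ ^ 2 + ⟪w, y⟫) : ℝ) : ℂ) := fun y => by push_cast; simp
  have hi := GaussianFourier.integrable_cexp_neg_mul_sq_norm_add_of_euclideanSpace
    (b := (b : ℂ)) (by simpa using hb) 1 w
  have he := GaussianFourier.integral_cexp_neg_mul_sq_norm_add_of_euclideanSpace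
    (b := (b : ℂ)) (by simpa using hb) 1 w
  simp_rw [hcast] at hi he
  have hi' : Integrable fun y : EuclideanSpace ℝ (Fin n) =>
      Real.exp (-b * ‖y‖ ^ 2 + ⟪w, y⟫) := by
    exact hi.re.congr (.of_forall fun y => Complex.ofReal_re _)
  rw [← ofReal_integral_eq_lintegral_ofReal hi' (.of_forall fun _ => (Real.exp_pos _).le)]
  congr 1
  rw [integral_complex_ofReal] at he
  apply Complex.ofReal_injective
  rw [he]
  push_cast
  rw [Complex.ofReal_cpow (by positivity)]
  push_cast
  simp

lemma lintegral_gaussE_exp {a : ℝ} (ha : a < 1 / 2) (w : EuclideanSpace ℝ (Fin n)) :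
    ∫⁻ y, ENNReal.ofReal (Real.exp (a * ‖y‖ ^ 2 + ⟪w, y⟫)) ∂(gaussE n) =
      ENNReal.ofReal (((1 - 2 * a)⁻¹) ^ ((n : ℝ) / 2) *
        Real.exp (‖w‖ ^ 2 / (2 * (1 - 2 * a)))) := by
  have h2π : 0 < (2 * Real.pi) ^ ((n : ℝ) / 2) := by positivity
  rw [gaussE, lintegral_withDensity_eq_lintegral_mul _ (by fun_prop) (by fun_prop)]
  have : ∀ y : EuclideanSpace ℝ (Fin n),
      ((fun y : EuclideanSpace ℝ (Fin n) => ENNReal.ofReal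
        (((2 * Real.pi) ^ ((n : ℝ) / 2))⁻¹ * Real.exp (-(1 / 2) * ‖y‖ ^ 2))) *
        fun y => ENNReal.ofReal (Real.exp (a * ‖y‖ ^ 2 + ⟪w, y⟫))) y =
      ENNReal.ofReal (((2 * Real.pi) ^ ((n : ℝ) / 2))⁻¹) *
        ENNReal.ofReal (Real.exp (-(1 / 2 - a) * ‖y‖ ^ 2 + ⟪w, y⟫)) := by
    intro y
    rw [Pi.mul_apply, ← ENNReal.ofReal_mul (by positivity), ← ENNReal.ofReal_mul (by positivity),
      mul_assoc, ← Real.exp_add]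
    congr 3
    ring
  simp_rw [this]
  rw [lintegral_const_mul _ (by fun_prop), lintegral_volume_exp (by linarith),
    ← ENNReal.ofReal_mul (by positivity), ← mul_assoc]
  have hpos : 0 < 1 - 2 * a := by linarith
  congr 2
  · rw [show Real.pi / (1 / 2 - a) = (2 * Real.pi) * (1 - 2 * a)⁻¹ by
      rw [show 1 / 2 - a = (1 - 2 * a) / 2 by ring]; field_simp,
      Real.mul_rpow (x := 2 * Real.pi) (y := (1 - 2 * a)⁻¹) (by positivity) (by positivity),
      ← mul_assoc, inv_mul_cancel₀ h2π.ne', one_mul]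
  · congr 2
    ring

/-- Exponential square integrability of the norm, obtained by writing `exp (s ‖x‖² / 2)` as a
Gaussian average of `exp ⟪x, √s • y⟫` and exchanging the integrals. -/
lemma lintegral_exp_norm_sq_le {μ : Measure (EuclideanSpace ℝ (Fin n))} [IsProbabilityMeasure μ]
    {K : ℝ} (hK : 0 ≤ K)
    (hmgf : ∀ v, ∫⁻ x, ENNReal.ofReal (Real.exp ⟪x, v⟫) ∂μ ≤
      ENNReal.ofReal (Real.exp (K * ‖v‖ ^ 2)))
    {s : ℝ} (hs : 0 ≤ s) (hs2 : 2 * K * s ≤ 1 / 2) :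
    ∫⁻ x, ENNReal.ofReal (Real.exp (s / 2 * ‖x‖ ^ 2)) ∂μ ≤
      ENNReal.ofReal (Real.exp (2 * K * s * n)) := by
  have h1 : ∀ x : EuclideanSpace ℝ (Fin n), ENNReal.ofReal (Real.exp (s / 2 * ‖x‖ ^ 2)) =
      ∫⁻ y, ENNReal.ofReal (Real.exp ⟪x, Real.sqrt s • y⟫) ∂(gaussE n) := by
    intro x
    have := lintegral_gaussE_exp (a := 0) (by norm_num) (Real.sqrt s • x)
    simp only [zero_mul, zero_add, mul_zero, sub_zero, inv_one, Real.one_rpow, one_mul, mul_one,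
      norm_smul, mul_pow, Real.norm_eq_abs, sq_abs, Real.sq_sqrt hs] at this
    simp only [real_inner_smul_left, real_inner_smul_right] at this ⊢
    rw [this]
    congr 2
    ring
  simp_rw [h1]
  rw [lintegral_lintegral_swap (by fun_prop)]
  calc ∫⁻ y, ∫⁻ x, ENNReal.ofReal (Real.exp ⟪x, Real.sqrt s • y⟫) ∂μ ∂(gaussE n)
      ≤ ∫⁻ y, ENNReal.ofReal (Real.exp (K * s * ‖y‖ ^ 2 + ⟪0, y⟫)) ∂(gaussE n) := by
        refine lintegral_mono fun y => (hmgf _).trans (le_of_eq ?_)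
        rw [norm_smul, mul_pow, Real.norm_eq_abs, sq_abs, Real.sq_sqrt hs, inner_zero_left]
        congr 2
        ring
    _ = _ := lintegral_gaussE_exp (by linarith) 0
    _ ≤ _ := by
        refine ENNReal.ofReal_le_ofReal ?_
        set u := 2 * K * s with hu
        have hu0 : 0 ≤ u := by positivity
        rw [show 2 * (K * s) = u by rw [hu]; ring]
        have h2 : (1 - u)⁻¹ ≤ Real.exp (2 * u) := by
          rw [inv_le_iff_one_le_mul₀ (by linarith)]
          have := Real.add_one_le_exp (2 * u)
          nlinarith
        have h3 : ((1 - u)⁻¹) ^ ((n : ℝ) / 2) ≤ Real.exp (2 * u) ^ ((n : ℝ) / 2) :=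
          Real.rpow_le_rpow (inv_nonneg.2 (by linarith)) h2 (by positivity)
        rw [← Real.exp_mul] at h3
        simp only [norm_zero, ne_eq, OfNat.ofNat_ne_zero, not_false_eq_true, zero_pow, zero_div,
          Real.exp_zero, mul_one]
        refine h3.trans (le_of_eq ?_)
        congr 1
        ring

/-- The density, with respect to the standard Gaussian measure in the variable `y`, of the
Gaussian measure with covariance the identity and mean `√t • x`. -/
noncomputable def tiltKernel (t : ℝ) (x y : EuclideanSpace ℝ (Fin n)) : ℝ≥0∞ :=
  ENNReal.ofReal (Real.exp (Real.sqrt t * ⟪x, y⟫ - t / 2 * ‖x‖ ^ 2))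

lemma measurable_tiltKernel (t : ℝ) :
    Measurable (Function.uncurry (tiltKernel (n := n) t)) := by
  unfold tiltKernel Function.uncurry
  fun_prop

lemma lintegral_tiltKernel {t : ℝ} (ht : 0 ≤ t) (x : EuclideanSpace ℝ (Fin n)) :
    ∫⁻ y, tiltKernel t x y ∂(gaussE n) = 1 := by
  have h := lintegral_gaussE_exp (a := 0) (by norm_num) (Real.sqrt t • x)
  have h2 : ∀ y, tiltKernel t x y = ENNReal.ofReal (Real.exp (-(t / 2 * ‖x‖ ^ 2))) *
      ENNReal.ofReal (Real.exp (0 * ‖y‖ ^ 2 + ⟪Real.sqrt t • x, y⟫)) := fun y => by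
    rw [tiltKernel, ← ENNReal.ofReal_mul (Real.exp_pos _).le, ← Real.exp_add,
      real_inner_smul_left]
    congr 2
    ring
  simp_rw [h2]
  rw [lintegral_const_mul _ (by fun_prop), h, ← ENNReal.ofReal_mul (Real.exp_pos _).le]
  simp only [mul_zero, sub_zero, inv_one, Real.one_rpow, one_mul, mul_one,
      norm_smul, mul_pow, Real.norm_eq_abs, sq_abs, Real.sq_sqrt ht]
  rw [← Real.exp_add, ← ENNReal.ofReal_one, ← Real.exp_zero]
  congr 2
  ring

lemma lintegral_tiltKernel_mul {t : ℝ} (ht : 0 ≤ t) (x z : EuclideanSpace ℝ (Fin n)) :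
    ∫⁻ y, tiltKernel t x y * tiltKernel t z y ∂(gaussE n) =
      ENNReal.ofReal (Real.exp ⟪z, t • x⟫) := by
  have h := lintegral_gaussE_exp (a := 0) (by norm_num) (Real.sqrt t • (x + z))
  have h2 : ∀ y, tiltKernel t x y * tiltKernel t z y =
      ENNReal.ofReal (Real.exp (-(t / 2 * ‖x‖ ^ 2 + t / 2 * ‖z‖ ^ 2))) *
      ENNReal.ofReal (Real.exp (0 * ‖y‖ ^ 2 + ⟪Real.sqrt t • (x + z), y⟫)) := fun y => by
    rw [tiltKernel, tiltKernel, ← ENNReal.ofReal_mul (Real.exp_pos _).le,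
      ← ENNReal.ofReal_mul (Real.exp_pos _).le, ← Real.exp_add, ← Real.exp_add,
      real_inner_smul_left, inner_add_left]
    congr 2
    ring
  simp_rw [h2]
  rw [lintegral_const_mul _ (by fun_prop), h, ← ENNReal.ofReal_mul (Real.exp_pos _).le]
  simp only [mul_zero, sub_zero, inv_one, Real.one_rpow, one_mul, mul_one,
      norm_smul, mul_pow, Real.norm_eq_abs, sq_abs, Real.sq_sqrt ht]
  rw [← Real.exp_add, real_inner_smul_right, @norm_add_sq_real, real_inner_comm x z]
  congr 2
  ring

lemma lintegral_tiltKernel_exp {t : ℝ} (ht : 0 ≤ t) (x : EuclideanSpace ℝ (Fin n)) :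
    ∫⁻ y, tiltKernel t x y * ENNReal.ofReal (Real.exp (1 / 4 * ‖y‖ ^ 2)) ∂(gaussE n) =
      ENNReal.ofReal (2 ^ ((n : ℝ) / 2)) * ENNReal.ofReal (Real.exp (t / 2 * ‖x‖ ^ 2)) := by
  have h := lintegral_gaussE_exp (a := 1 / 4) (by norm_num) (Real.sqrt t • x)
  have h2 : ∀ y, tiltKernel t x y * ENNReal.ofReal (Real.exp (1 / 4 * ‖y‖ ^ 2)) =
      ENNReal.ofReal (Real.exp (-(t / 2 * ‖x‖ ^ 2))) *
      ENNReal.ofReal (Real.exp (1 / 4 * ‖y‖ ^ 2 + ⟪Real.sqrt t • x, y⟫)) := fun y => by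
    rw [tiltKernel, ← ENNReal.ofReal_mul (Real.exp_pos _).le,
      ← ENNReal.ofReal_mul (Real.exp_pos _).le, ← Real.exp_add, ← Real.exp_add,
      real_inner_smul_left]
    congr 2
    ring
  simp_rw [h2]
  rw [lintegral_const_mul _ (by fun_prop), h, ← ENNReal.ofReal_mul (Real.exp_pos _).le,
    ← ENNReal.ofReal_mul (by positivity)]
  simp only [norm_smul, mul_pow, Real.norm_eq_abs, sq_abs, Real.sq_sqrt ht]
  rw [mul_left_comm, ← Real.exp_add]
  congr 3
  · norm_num
  · ring

end

/-! ### The small-ball estimate -/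

section

variable {n : ℕ}

lemma tiltKernel_le {t : ℝ} (ht : 0 ≤ t) (x y : EuclideanSpace ℝ (Fin n)) :
    tiltKernel t x y ≤ ENNReal.ofReal (Real.exp (‖y‖ ^ 2 / 2)) := by
  refine ENNReal.ofReal_le_ofReal (Real.exp_le_exp.2 ?_)
  have h1 : ⟪x, y⟫ ≤ ‖x‖ * ‖y‖ := real_inner_le_norm x y
  have h2 := Real.sq_sqrt ht
  have h3 := Real.sqrt_nonneg t
  have h4 := mul_le_mul_of_nonneg_left h1 h3
  nlinarith [sq_nonneg (Real.sqrt t * ‖x‖ - ‖y‖)]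

lemma measurable_tiltKernel_left (t : ℝ) (y : EuclideanSpace ℝ (Fin n)) :
    Measurable fun x => tiltKernel t x y := by
  unfold tiltKernel
  fun_prop

lemma measurable_tiltKernel_right (t : ℝ) (x : EuclideanSpace ℝ (Fin n)) :
    Measurable fun y => tiltKernel t x y := by
  unfold tiltKernel
  fun_prop

lemma measurable_tiltKernel_swap (t : ℝ) :
    Measurable fun p : EuclideanSpace ℝ (Fin n) × EuclideanSpace ℝ (Fin n) =>
      tiltKernel t p.2 p.1 := by
  unfold tiltKernel
  fun_prop

lemma measurable_lintegral_tiltKernel (μ : Measure (EuclideanSpace ℝ (Fin n))) [SFinite μ]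
    (t : ℝ) : Measurable fun y => ∫⁻ x, tiltKernel t x y ∂μ :=
  Measurable.lintegral_prod_left' (measurable_tiltKernel t)

/-- The second moment, under the Gaussian measure, of the mixture of tilted Gaussians. -/
lemma lintegral_mixture_sq_le {μ : Measure (EuclideanSpace ℝ (Fin n))} [IsProbabilityMeasure μ]
    {K : ℝ} (hK : 0 ≤ K)
    (hmgf : ∀ v, ∫⁻ x, ENNReal.ofReal (Real.exp ⟪x, v⟫) ∂μ ≤
      ENNReal.ofReal (Real.exp (K * ‖v‖ ^ 2)))
    {t : ℝ} (ht : 0 ≤ t) (ht2 : 4 * K ^ 2 * t ^ 2 ≤ 1 / 2) :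
    ∫⁻ y, (∫⁻ x, tiltKernel t x y ∂μ) * (∫⁻ x, tiltKernel t x y ∂μ) ∂(gaussE n) ≤
      ENNReal.ofReal (Real.exp (4 * K ^ 2 * t ^ 2 * n)) := by
  have hk := measurable_tiltKernel_swap (n := n) t
  have hk1 := measurable_tiltKernel_left (n := n) t
  have hk2 := measurable_tiltKernel_right (n := n) t
  have hL := measurable_lintegral_tiltKernel μ t
  calc ∫⁻ y, (∫⁻ x, tiltKernel t x y ∂μ) * (∫⁻ x, tiltKernel t x y ∂μ) ∂(gaussE n)
      = ∫⁻ y, ∫⁻ x, tiltKernel t x y * (∫⁻ z, tiltKernel t z y ∂μ) ∂μ ∂(gaussE n) :=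
        lintegral_congr fun y => (lintegral_mul_const _ (hk1 y)).symm
    _ = ∫⁻ x, ∫⁻ y, tiltKernel t x y * (∫⁻ z, tiltKernel t z y ∂μ) ∂(gaussE n) ∂μ := by
        refine lintegral_lintegral_swap (Measurable.aemeasurable ?_)
        exact hk.mul (hL.comp measurable_fst)
    _ = ∫⁻ x, ∫⁻ y, ∫⁻ z, tiltKernel t x y * tiltKernel t z y ∂μ ∂(gaussE n) ∂μ :=
        lintegral_congr fun x => lintegral_congr fun y => (lintegral_const_mul _ (hk1 y)).symm
    _ = ∫⁻ x, ∫⁻ z, ∫⁻ y, tiltKernel t x y * tiltKernel t z y ∂(gaussE n) ∂μ ∂μ := by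
        refine lintegral_congr fun x => lintegral_lintegral_swap (Measurable.aemeasurable ?_)
        exact ((hk2 x).comp measurable_fst).mul hk
    _ ≤ ∫⁻ x, ENNReal.ofReal (Real.exp (2 * K * t ^ 2 / 2 * ‖x‖ ^ 2)) ∂μ := by
        refine lintegral_mono fun x => ?_
        simp_rw [lintegral_tiltKernel_mul ht]
        refine (hmgf _).trans (le_of_eq ?_)
        rw [norm_smul, mul_pow, Real.norm_eq_abs, sq_abs]
        congr 2
        ring
    _ ≤ ENNReal.ofReal (Real.exp (2 * K * (2 * K * t ^ 2) * n)) :=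
        lintegral_exp_norm_sq_le hK hmgf (by positivity) (by linarith)
    _ = _ := by
        congr 2
        ring

/-- The exponential square moment, under the Gaussian measure, of the same mixture. -/
lemma lintegral_mixture_exp_le {μ : Measure (EuclideanSpace ℝ (Fin n))} [IsProbabilityMeasure μ]
    {K : ℝ} (hK : 0 ≤ K)
    (hmgf : ∀ v, ∫⁻ x, ENNReal.ofReal (Real.exp ⟪x, v⟫) ∂μ ≤
      ENNReal.ofReal (Real.exp (K * ‖v‖ ^ 2)))
    {t : ℝ} (ht : 0 ≤ t) (ht1 : 2 * K * t ≤ 1 / 2) :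
    ∫⁻ y, (∫⁻ x, tiltKernel t x y ∂μ) * ENNReal.ofReal (Real.exp (1 / 4 * ‖y‖ ^ 2))
      ∂(gaussE n) ≤ ENNReal.ofReal (2 ^ ((n : ℝ) / 2) * Real.exp (2 * K * t * n)) := by
  have hk := measurable_tiltKernel_swap (n := n) t
  have hk1 := measurable_tiltKernel_left (n := n) t
  simp_rw [← fun y => lintegral_mul_const (μ := μ)
    (ENNReal.ofReal (Real.exp (1 / 4 * ‖y‖ ^ 2))) (hk1 y)]
  rw [lintegral_lintegral_swap (Measurable.aemeasurable
    (hk.mul (by fun_prop)))]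
  simp_rw [lintegral_tiltKernel_exp ht]
  rw [lintegral_const_mul _ (by fun_prop), ENNReal.ofReal_mul (by positivity)]
  gcongr
  exact lintegral_exp_norm_sq_le hK hmgf ht ht1

/-- Some tilt direction `y` of moderate size keeps a fair share of the mass on `T`, relative both
to the square of the total mass and to the Gaussian weight. -/
lemma exists_good_tilt {μ : Measure (EuclideanSpace ℝ (Fin n))} [IsProbabilityMeasure μ]
    {K : ℝ} (hK : 0 ≤ K)
    (hmgf : ∀ v, ∫⁻ x, ENNReal.ofReal (Real.exp ⟪x, v⟫) ∂μ ≤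
      ENNReal.ofReal (Real.exp (K * ‖v‖ ^ 2)))
    {t : ℝ} (ht : 0 ≤ t) (ht1 : 2 * K * t ≤ 1 / 2) (ht2 : 4 * K ^ 2 * t ^ 2 ≤ 1 / 2)
    {T : Set (EuclideanSpace ℝ (Fin n))} {τ : ℝ} (hτ : 0 < τ)
    (hμT : ENNReal.ofReal τ ≤ μ T) :
    ∃ y, ENNReal.ofReal (τ / 4 / Real.exp (4 * K ^ 2 * t ^ 2 * n)) *
          ((∫⁻ x, tiltKernel t x y ∂μ) * (∫⁻ x, tiltKernel t x y ∂μ)) +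
        ENNReal.ofReal (τ / 4 / (2 ^ ((n : ℝ) / 2) * Real.exp (2 * K * t * n))) *
          ((∫⁻ x, tiltKernel t x y ∂μ) * ENNReal.ofReal (Real.exp (1 / 4 * ‖y‖ ^ 2))) <
        ∫⁻ x in T, tiltKernel t x y ∂μ := by
  by_contra! hcon
  have hk := measurable_tiltKernel_swap (n := n) t
  have hL := measurable_lintegral_tiltKernel μ t
  have h1 : ∫⁻ y, ∫⁻ x in T, tiltKernel t x y ∂μ ∂(gaussE n) = μ T := by
    rw [lintegral_lintegral_swap hk.aemeasurable]
    simp [lintegral_tiltKernel ht]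
  have h2 := lintegral_mono (μ := gaussE n) hcon
  rw [h1, lintegral_add_left (by fun_prop), lintegral_const_mul _ (by fun_prop),
    lintegral_const_mul _ (by fun_prop)] at h2
  have hM : 0 < Real.exp (4 * K ^ 2 * t ^ 2 * n) := Real.exp_pos _
  have hM2 : 0 < (2 : ℝ) ^ ((n : ℝ) / 2) * Real.exp (2 * K * t * n) := by positivity
  have h3 := hμT.trans (h2.trans (add_le_add
    (mul_le_mul_right (lintegral_mixture_sq_le hK hmgf ht ht2) _)
    (mul_le_mul_right (lintegral_mixture_exp_le hK hmgf ht ht1) _)))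
  rw [← ENNReal.ofReal_mul (by positivity), ← ENNReal.ofReal_mul (by positivity),
    div_mul_cancel₀ _ hM.ne', div_mul_cancel₀ _ hM2.ne',
    ← ENNReal.ofReal_add (by positivity) (by positivity),
    ENNReal.ofReal_le_ofReal_iff (by positivity)] at h3
  linarith

/-- Prékopa–Leindler for the tilted measure: a ball and the complement of a larger concentric ball
cannot both carry much mass, by the parallelogram identity. -/
lemma MidPL.tilt_ball {μ : Measure (EuclideanSpace ℝ (Fin n))} (hPL : MidPL μ)
    {t : ℝ} (ht : 0 ≤ t) {r R : ℝ} (hrR : r ≤ R) (y : EuclideanSpace ℝ (Fin n)) :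
    (∫⁻ x in {x | ‖x‖ ≤ r}, tiltKernel t x y ∂μ) * (∫⁻ x in {x | R ≤ ‖x‖}, tiltKernel t x y ∂μ) ≤
      ENNReal.ofReal (Real.exp (-(t * (R - r) ^ 2 / 4))) * (∫⁻ x, tiltKernel t x y ∂μ) ^ 2 := by
  have hk1 := measurable_tiltKernel_left (n := n) t y
  have hS : MeasurableSet {x : EuclideanSpace ℝ (Fin n) | ‖x‖ ≤ r} :=
    measurableSet_le measurable_norm measurable_const
  have hT : MeasurableSet {x : EuclideanSpace ℝ (Fin n) | R ≤ ‖x‖} :=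
    measurableSet_le measurable_const measurable_norm
  have h := hPL _ _ (fun x => ENNReal.ofReal (Real.exp (-(t * (R - r) ^ 2 / 8))) * tiltKernel t x y)
    (hk1.indicator hS) (hk1.indicator hT) (by fun_prop) ?_
  · rw [lintegral_indicator hS, lintegral_indicator hT, lintegral_const_mul _ hk1, mul_pow,
      ← ENNReal.ofReal_pow (Real.exp_pos _).le, ← Real.exp_nat_mul] at h
    refine h.trans (le_of_eq ?_)
    congr 3
    push_cast
    ring
  · intro x z
    by_cases hx : x ∈ {x : EuclideanSpace ℝ (Fin n) | ‖x‖ ≤ r}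
    · by_cases hz : z ∈ {x : EuclideanSpace ℝ (Fin n) | R ≤ ‖x‖}
      · rw [Set.indicator_of_mem hx, Set.indicator_of_mem hz]
        simp only [tiltKernel]
        rw [← ENNReal.ofReal_mul (Real.exp_pos _).le, ← ENNReal.ofReal_mul (Real.exp_pos _).le,
          ← ENNReal.ofReal_pow (by positivity), ← Real.exp_add, ← Real.exp_add, ← Real.exp_nat_mul]
        refine ENNReal.ofReal_le_ofReal (Real.exp_le_exp.2 ?_)
        simp only [Set.mem_ofPred_eq] at hx hz
        have hd : R - r ≤ ‖x - z‖ := by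
          have := norm_sub_norm_le z x
          rw [norm_sub_rev] at this
          linarith
        have hd2 : (R - r) ^ 2 ≤ ‖x - z‖ ^ 2 := pow_le_pow_left₀ (by linarith) hd 2
        have hpar := parallelogram_law_with_norm ℝ x z
        have htd := mul_le_mul_of_nonneg_left hd2 ht
        rw [norm_smul, real_inner_smul_left, inner_add_left, Real.norm_eq_abs,
          abs_of_pos (by norm_num : (0 : ℝ) < 1 / 2)]
        have hpar' : t * ‖x - z‖ ^ 2 = 2 * (t * ‖x‖ ^ 2) + 2 * (t * ‖z‖ ^ 2) - t * ‖x + z‖ ^ 2 := by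
          linear_combination t * hpar
        push_cast
        nlinarith
      · rw [Set.indicator_of_notMem hz, mul_zero]; exact zero_le
    · rw [Set.indicator_of_notMem hx, zero_mul]; exact zero_le

/-- Small-ball estimate. For the tilt `y` of `exists_good_tilt`, the inequality `MidPL.tilt_ball`
bounds the tilted mass of the ball, and on the ball the tilt costs only a factor controlled by
`r * ‖y‖`, where `‖y‖` is itself controlled by the first conclusion. -/
lemma MidPL.small_ball {μ : Measure (EuclideanSpace ℝ (Fin n))} [IsProbabilityMeasure μ]
    (hPL : MidPL μ) {K : ℝ} (hK : 0 ≤ K)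
    (hmgf : ∀ v, ∫⁻ x, ENNReal.ofReal (Real.exp ⟪x, v⟫) ∂μ ≤
      ENNReal.ofReal (Real.exp (K * ‖v‖ ^ 2)))
    {t : ℝ} (ht : 0 ≤ t) (ht1 : 2 * K * t ≤ 1 / 2) (ht2 : 4 * K ^ 2 * t ^ 2 ≤ 1 / 2)
    {r R : ℝ} (hrR : r ≤ R) {τ : ℝ} (hτ : 0 < τ)
    (hμT : ENNReal.ofReal τ ≤ μ {x | R ≤ ‖x‖}) :
    ∃ y : EuclideanSpace ℝ (Fin n),
      Real.exp (1 / 4 * ‖y‖ ^ 2) ≤ (2 ^ ((n : ℝ) / 2) * Real.exp (2 * K * t * n)) / (τ / 4) ∧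
      μ {x | ‖x‖ ≤ r} ≤ ENNReal.ofReal (Real.exp (4 * K ^ 2 * t ^ 2 * n) / (τ / 4) *
        Real.exp (-(t * (R - r) ^ 2 / 4) + (Real.sqrt t * (r * ‖y‖) + t / 2 * r ^ 2))) := by
  obtain ⟨y, hy⟩ := exists_good_tilt hK hmgf ht ht1 ht2 hτ hμT
  have hPLy := hPL.tilt_ball ht hrR y
  refine ⟨y, ?_⟩
  have hLT : ∫⁻ x in {x | R ≤ ‖x‖}, tiltKernel t x y ∂μ ≤ ∫⁻ x, tiltKernel t x y ∂μ :=
    setLIntegral_le_lintegral _ _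
  have hLtop : ∫⁻ x, tiltKernel t x y ∂μ ≠ ⊤ := by
    refine ne_top_of_le_ne_top ?_ (lintegral_mono fun x => tiltKernel_le ht x y)
    simp
  have hL0 : ∫⁻ x, tiltKernel t x y ∂μ ≠ 0 := ((zero_le.trans_lt hy).trans_le hLT).ne'
  have hLS : ENNReal.ofReal (Real.exp (-(Real.sqrt t * (r * ‖y‖) + t / 2 * r ^ 2))) *
      μ {x | ‖x‖ ≤ r} ≤ ∫⁻ x in {x | ‖x‖ ≤ r}, tiltKernel t x y ∂μ := by
    rw [← setLIntegral_const]
    refine setLIntegral_mono' (measurableSet_le measurable_norm measurable_const) fun x hx => ?_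
    simp only [Set.mem_ofPred_eq] at hx
    rw [tiltKernel]
    refine ENNReal.ofReal_le_ofReal (Real.exp_le_exp.2 ?_)
    have h1 : -(r * ‖y‖) ≤ ⟪x, y⟫ := by
      have := neg_le_of_abs_le (abs_real_inner_le_norm x y)
      have := mul_le_mul_of_nonneg_right hx (norm_nonneg y)
      linarith
    have h2 := mul_le_mul_of_nonneg_left h1 (Real.sqrt_nonneg t)
    have h3 : t / 2 * ‖x‖ ^ 2 ≤ t / 2 * r ^ 2 := by gcongr
    linarith
  set L := ∫⁻ x, tiltKernel t x y ∂μ with hLdef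
  set LT := ∫⁻ x in {x | R ≤ ‖x‖}, tiltKernel t x y ∂μ with hLTdef
  set LS := ∫⁻ x in {x | ‖x‖ ≤ r}, tiltKernel t x y ∂μ with hLSdef
  set M := Real.exp (4 * K ^ 2 * t ^ 2 * n) with hMdef
  set M2 := (2 : ℝ) ^ ((n : ℝ) / 2) * Real.exp (2 * K * t * n) with hM2def
  have hM : 0 < M := Real.exp_pos _
  have hM2 : 0 < M2 := by positivity
  constructor
  · have h1 : ENNReal.ofReal (τ / 4 / M2) * (L * ENNReal.ofReal (Real.exp (1 / 4 * ‖y‖ ^ 2))) ≤ L :=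
      (le_add_self.trans hy.le).trans hLT
    have h2 : ENNReal.ofReal (τ / 4 / M2 * Real.exp (1 / 4 * ‖y‖ ^ 2)) ≤ 1 := by
      rw [ENNReal.ofReal_mul (by positivity)]
      refine (ENNReal.mul_le_mul_iff_right hL0 hLtop).1 ?_
      rw [mul_one]
      refine le_of_eq_of_le ?_ h1
      ring
    rw [ENNReal.ofReal_le_one] at h2
    rw [le_div_iff₀ (by positivity)]
    rw [div_mul_eq_mul_div, div_le_one hM2] at h2
    linarith
  · have h1 : LS * (ENNReal.ofReal (τ / 4 / M) * (L * L)) ≤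
        ENNReal.ofReal (Real.exp (-(t * (R - r) ^ 2 / 4))) * L ^ 2 :=
      (mul_le_mul_right (le_self_add.trans hy.le) _).trans hPLy
    have h2 : LS * ENNReal.ofReal (τ / 4 / M) ≤
        ENNReal.ofReal (Real.exp (-(t * (R - r) ^ 2 / 4))) := by
      refine (ENNReal.mul_le_mul_iff_left (pow_ne_zero 2 hL0) (ENNReal.pow_ne_top hLtop)).1 ?_
      refine le_of_eq_of_le ?_ h1
      ring
    have h3 := (mul_le_mul_left hLS (ENNReal.ofReal (τ / 4 / M))).trans h2
    rw [Real.exp_add, ENNReal.ofReal_mul (by positivity), ENNReal.ofReal_mul (by positivity)]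
    have h4 : ∀ a : ℝ, ENNReal.ofReal (Real.exp a) * ENNReal.ofReal (Real.exp (-a)) = 1 := by
      intro a
      rw [← ENNReal.ofReal_mul (Real.exp_pos _).le, ← Real.exp_add, add_neg_cancel, Real.exp_zero,
        ENNReal.ofReal_one]
    have h5 : ENNReal.ofReal (M / (τ / 4)) * ENNReal.ofReal (τ / 4 / M) = 1 := by
      rw [← ENNReal.ofReal_mul (by positivity), ← ENNReal.ofReal_one]
      congr 1
      field_simp
    set A := Real.sqrt t * (r * ‖y‖) + t / 2 * r ^ 2
    calc μ {x | ‖x‖ ≤ r}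
        = (ENNReal.ofReal (M / (τ / 4)) * ENNReal.ofReal (τ / 4 / M)) *
          (ENNReal.ofReal (Real.exp A) * ENNReal.ofReal (Real.exp (-A))) * μ {x | ‖x‖ ≤ r} := by
          rw [h4, h5, one_mul, one_mul]
      _ = ENNReal.ofReal (M / (τ / 4)) * ENNReal.ofReal (Real.exp A) *
          (ENNReal.ofReal (Real.exp (-A)) * μ {x | ‖x‖ ≤ r} * ENNReal.ofReal (τ / 4 / M)) := by
          ring
      _ ≤ ENNReal.ofReal (M / (τ / 4)) * ENNReal.ofReal (Real.exp A) *
          ENNReal.ofReal (Real.exp (-(t * (R - r) ^ 2 / 4))) := mul_le_mul_right h3 _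
      _ = _ := by ring

end

/-! ### Exponential Fisher separability -/

section

variable {n : ℕ}

lemma lintegral_norm_sq {μ : Measure (EuclideanSpace ℝ (Fin n))}
    (h2 : ∀ θ : EuclideanSpace ℝ (Fin n), ‖θ‖ = 1 → ∫⁻ x, ENNReal.ofReal (⟪x, θ⟫ ^ 2) ∂μ = 1) :
    ∫⁻ x, ENNReal.ofReal (‖x‖ ^ 2) ∂μ = n := by
  have h : ∀ x : EuclideanSpace ℝ (Fin n), ENNReal.ofReal (‖x‖ ^ 2) =
      ∑ i : Fin n, ENNReal.ofReal (⟪x, EuclideanSpace.single i (1 : ℝ)⟫ ^ 2) := by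
    intro x
    rw [EuclideanSpace.norm_sq_eq, ENNReal.ofReal_sum_of_nonneg fun _ _ => by positivity]
    simp [EuclideanSpace.inner_single_right]
  simp_rw [h]
  rw [lintegral_finsetSum _ fun _ _ => by fun_prop]
  simp [h2]

lemma lintegral_norm_pow_four_le {μ : Measure (EuclideanSpace ℝ (Fin n))} {D : ℝ}
    (h4 : ∀ θ : EuclideanSpace ℝ (Fin n), ‖θ‖ = 1 →
      ∫⁻ x, ENNReal.ofReal (⟪x, θ⟫ ^ 4) ∂μ ≤ ENNReal.ofReal D) :
    ∫⁻ x, ENNReal.ofReal (‖x‖ ^ 4) ∂μ ≤ ENNReal.ofReal (n ^ 2 * D) := by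
  have h : ∀ x : EuclideanSpace ℝ (Fin n), ENNReal.ofReal (‖x‖ ^ 4) ≤
      ENNReal.ofReal n *
        ∑ i : Fin n, ENNReal.ofReal (⟪x, EuclideanSpace.single i (1 : ℝ)⟫ ^ 4) := by
    intro x
    rw [← ENNReal.ofReal_sum_of_nonneg fun _ _ => by positivity,
      ← ENNReal.ofReal_mul (by positivity)]
    refine ENNReal.ofReal_le_ofReal ?_
    have := sq_sum_le_card_mul_sum_sq (s := Finset.univ) (f := fun i : Fin n => x i ^ 2)
    rw [show ‖x‖ ^ 4 = (‖x‖ ^ 2) ^ 2 by ring, EuclideanSpace.norm_sq_eq]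
    simpa [EuclideanSpace.inner_single_right, ← pow_mul] using this
  refine (lintegral_mono h).trans ?_
  rw [lintegral_const_mul _ (by fun_prop), lintegral_finsetSum _ fun _ _ => by fun_prop,
    pow_two, mul_assoc, ENNReal.ofReal_mul (by positivity)]
  gcongr
  refine (Finset.sum_le_sum fun i _ => h4 (EuclideanSpace.single i (1 : ℝ)) (by simp)).trans ?_
  rw [Finset.sum_const, Finset.card_univ, Fintype.card_fin, nsmul_eq_mul,
    ENNReal.ofReal_mul (by positivity), ENNReal.ofReal_natCast]

/-- A Paley–Zygmund bound: the norm is at least `√n / 2` with probability bounded below. -/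
lemma measure_norm_ge {μ : Measure (EuclideanSpace ℝ (Fin n))} [IsProbabilityMeasure μ]
    (hn : 0 < n) {D : ℝ} (hD : 0 < D)
    (h2 : ∀ θ : EuclideanSpace ℝ (Fin n), ‖θ‖ = 1 → ∫⁻ x, ENNReal.ofReal (⟪x, θ⟫ ^ 2) ∂μ = 1)
    (h4 : ∀ θ : EuclideanSpace ℝ (Fin n), ‖θ‖ = 1 →
      ∫⁻ x, ENNReal.ofReal (⟪x, θ⟫ ^ 4) ∂μ ≤ ENNReal.ofReal D) :
    ENNReal.ofReal (1 / (8 * D)) ≤ μ {x | Real.sqrt n / 2 ≤ ‖x‖} := by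
  have hn' : (0 : ℝ) < n := by exact_mod_cast hn
  set T := {x : EuclideanSpace ℝ (Fin n) | Real.sqrt n / 2 ≤ ‖x‖} with hTdef
  have hT : MeasurableSet T := measurableSet_le measurable_const measurable_norm
  have hpt : ∀ x : EuclideanSpace ℝ (Fin n), ENNReal.ofReal (‖x‖ ^ 2) ≤
      ENNReal.ofReal (n / 4) + (ENNReal.ofReal (4 * D * n) * T.indicator 1 x +
        ENNReal.ofReal (1 / (4 * D * n)) * ENNReal.ofReal (‖x‖ ^ 4)) := by
    intro x
    by_cases hx : x ∈ T
    · rw [Set.indicator_of_mem hx, Pi.one_apply, mul_one,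
        ← ENNReal.ofReal_mul (by positivity), ← ENNReal.ofReal_add (by positivity) (by positivity),
        ← ENNReal.ofReal_add (by positivity) (by positivity)]
      refine ENNReal.ofReal_le_ofReal ?_
      set Q := 4 * D * n with hQ
      have hQ0 : 0 < Q := by positivity
      have : 0 ≤ (‖x‖ ^ 2 - Q) ^ 2 / Q := by positivity
      have h' : (‖x‖ ^ 2 - Q) ^ 2 / Q = 1 / Q * ‖x‖ ^ 4 - 2 * ‖x‖ ^ 2 + Q := by
        field_simp
        ring
      have : 0 ≤ 1 / Q * ‖x‖ ^ 4 := by positivity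
      linarith [sq_nonneg ‖x‖]
    · refine le_trans ?_ le_self_add
      refine ENNReal.ofReal_le_ofReal ?_
      have hx' : ‖x‖ < Real.sqrt n / 2 := by simpa [hTdef] using hx
      have := pow_le_pow_left₀ (norm_nonneg x) hx'.le 2
      rw [div_pow, Real.sq_sqrt hn'.le] at this
      linarith
  have hxint := lintegral_mono (μ := μ) hpt
  rw [lintegral_norm_sq h2, lintegral_add_left measurable_const,
    lintegral_add_left ((measurable_one.indicator hT).const_mul _),
    lintegral_const_mul _ (measurable_one.indicator hT), lintegral_const_mul _ (by fun_prop),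
    lintegral_indicator_one hT, lintegral_const, measure_univ, mul_one] at hxint
  have hfin := hxint.trans (add_le_add_right (add_le_add_right
    (mul_le_mul_right (lintegral_norm_pow_four_le h4) _) _) _)
  rw [← ENNReal.ofReal_natCast, ← ofReal_measureReal, ← ENNReal.ofReal_mul (by positivity),
    ← ENNReal.ofReal_mul (by positivity), ← ENNReal.ofReal_add (by positivity) (by positivity),
    ← ENNReal.ofReal_add (by positivity) (by positivity),
    ENNReal.ofReal_le_ofReal_iff (by positivity)] at hfin
  rw [← ofReal_measureReal]
  refine ENNReal.ofReal_le_ofReal ?_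
  have h1 : 1 / (4 * D * n) * (n ^ 2 * D) = (n : ℝ) / 4 := by field_simp
  rw [h1] at hfin
  rw [div_le_iff₀ (by positivity)]
  by_contra! hlt
  nlinarith

/-- Chernoff's bound for the half-space that witnesses the failure of Fisher separability. -/
lemma measure_halfSpace_le {μ : Measure (EuclideanSpace ℝ (Fin n))} {K : ℝ} (hK : 0 < K)
    (hmgf : ∀ v, ∫⁻ x, ENNReal.ofReal (Real.exp ⟪x, v⟫) ∂μ ≤
      ENNReal.ofReal (Real.exp (K * ‖v‖ ^ 2))) (x : EuclideanSpace ℝ (Fin n)) :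
    μ {y | ⟪x, x⟫ ≤ ⟪x, y⟫} ≤ ENNReal.ofReal (Real.exp (-(‖x‖ ^ 2 / (4 * K)))) := by
  have hA : MeasurableSet {y : EuclideanSpace ℝ (Fin n) | ⟪x, x⟫ ≤ ⟪x, y⟫} :=
    measurableSet_le measurable_const (by fun_prop)
  -- `1 / (2 * K)` is the minimiser of the exponent `K * l ^ 2 - l`
  have hpt : ∀ y, ({y | ⟪x, x⟫ ≤ ⟪x, y⟫} : Set (EuclideanSpace ℝ (Fin n))).indicator 1 y ≤
      ENNReal.ofReal (Real.exp (-(‖x‖ ^ 2 / (2 * K)))) *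
        ENNReal.ofReal (Real.exp ⟪y, (1 / (2 * K)) • x⟫) := by
    intro y
    by_cases hy : ⟪x, x⟫ ≤ ⟪x, y⟫
    · rw [Set.indicator_of_mem (by exact hy), Pi.one_apply,
        ← ENNReal.ofReal_mul (Real.exp_pos _).le, ← Real.exp_add, ENNReal.one_le_ofReal]
      refine Real.one_le_exp ?_
      rw [real_inner_smul_right, real_inner_comm]
      rw [real_inner_self_eq_norm_sq] at hy
      have := mul_le_mul_of_nonneg_left hy (by positivity : 0 ≤ 1 / (2 * K))
      have h2 : ‖x‖ ^ 2 / (2 * K) = 1 / (2 * K) * ‖x‖ ^ 2 := by ring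
      linarith
    · rw [Set.indicator_of_notMem (by exact hy)]
      exact zero_le
  have h := lintegral_mono (μ := μ) hpt
  rw [lintegral_indicator_one hA, lintegral_const_mul _ (by fun_prop)] at h
  refine (h.trans (mul_le_mul_right (hmgf _) _)).trans (le_of_eq ?_)
  rw [← ENNReal.ofReal_mul (Real.exp_pos _).le, ← Real.exp_add, norm_smul, Real.norm_eq_abs,
    mul_pow, sq_abs]
  congr 2
  field_simp
  ring

/-- Fisher separability can fail only if `x` lies in the ball of radius `r`, or `y` in a half-space
at distance at least `r` from the origin. -/
lemma fisher_failure_le {μ : Measure (EuclideanSpace ℝ (Fin n))} [IsProbabilityMeasure μ]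
    {K : ℝ} (hK : 0 < K)
    (hmgf : ∀ v, ∫⁻ x, ENNReal.ofReal (Real.exp ⟪x, v⟫) ∂μ ≤
      ENNReal.ofReal (Real.exp (K * ‖v‖ ^ 2))) {r : ℝ} (hr : 0 ≤ r) :
    (μ.prod μ) {p | ⟪p.1, p.1⟫ ≤ ⟪p.1, p.2⟫} ≤
      μ {x | ‖x‖ ≤ r} + ENNReal.ofReal (Real.exp (-(r ^ 2 / (4 * K)))) := by
  have hS : MeasurableSet {x : EuclideanSpace ℝ (Fin n) | ‖x‖ ≤ r} :=
    measurableSet_le measurable_norm measurable_const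
  rw [Measure.prod_apply (measurableSet_le (by fun_prop) (by fun_prop))]
  calc ∫⁻ x, μ (Prod.mk x ⁻¹' {p | ⟪p.1, p.1⟫ ≤ ⟪p.1, p.2⟫}) ∂μ
      ≤ ∫⁻ x, ({x | ‖x‖ ≤ r} : Set (EuclideanSpace ℝ (Fin n))).indicator 1 x +
          ENNReal.ofReal (Real.exp (-(r ^ 2 / (4 * K)))) ∂μ := by
        refine lintegral_mono fun x => ?_
        by_cases hx : ‖x‖ ≤ r
        · rw [Set.indicator_of_mem (by exact hx)]
          exact prob_le_one.trans le_self_add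
        · refine (measure_halfSpace_le hK hmgf x).trans (le_trans ?_ le_add_self)
          refine ENNReal.ofReal_le_ofReal (Real.exp_le_exp.2 ?_)
          have : r ^ 2 ≤ ‖x‖ ^ 2 := pow_le_pow_left₀ hr (by linarith) 2
          gcongr
    _ = _ := by
        rw [lintegral_add_left (measurable_one.indicator hS), lintegral_indicator_one hS]
        simp

/-- The good tilt has norm of order `√n`. -/
lemma norm_le_of_exp_le {K t q τ C : ℝ} {y : EuclideanSpace ℝ (Fin n)} (hn1 : (1 : ℝ) ≤ n)
    (hKt1 : K * t ≤ 1 / 1024) (hq : q = 1 / (τ / 4)) (hq0 : 0 < q) (hC0 : 0 < C)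
    (hC2 : C ^ 2 = 4 * (1 + q))
    (hy : Real.exp (1 / 4 * ‖y‖ ^ 2) ≤
      (2 ^ ((n : ℝ) / 2) * Real.exp (2 * K * t * n)) / (τ / 4)) :
    ‖y‖ ≤ C * Real.sqrt n := by
  have hsn : Real.sqrt n ^ 2 = n := Real.sq_sqrt (by positivity)
  have h1 : (2 : ℝ) ^ ((n : ℝ) / 2) ≤ Real.exp ((n : ℝ) / 2) := by
    rw [← Real.exp_one_rpow]
    exact Real.rpow_le_rpow (by norm_num) (by linarith [Real.add_one_le_exp (1 : ℝ)])
      (by positivity)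
  have h2 : q ≤ Real.exp (q * n) := by
    have := Real.add_one_le_exp (q * n)
    nlinarith
  have h3 : Real.exp (2 * K * t * n) ≤ Real.exp ((n : ℝ) / 2) := by
    refine Real.exp_le_exp.2 ?_
    nlinarith
  have h4 : Real.exp (1 / 4 * ‖y‖ ^ 2) ≤ Real.exp ((n : ℝ) / 2 + (n : ℝ) / 2 + q * n) := by
    rw [Real.exp_add, Real.exp_add]
    refine hy.trans ?_
    rw [div_eq_mul_one_div _ (τ / 4), ← hq]
    gcongr
  have h5 := Real.exp_le_exp.1 h4
  refine (pow_le_pow_iff_left₀ (norm_nonneg y) (by positivity) two_ne_zero).1 ?_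
  rw [mul_pow, hC2, hsn]
  linarith

/-- The arithmetic behind the choice of `t` and `ε`. -/
lemma tilt_exponent_le {K t ε C c u : ℝ} (hn1 : (1 : ℝ) ≤ n) (ht : 0 < t)
    (hKtt : 4 * K ^ 2 * t ^ 2 = t / 256) (hε0 : 0 < ε) (hε1 : ε ≤ 1 / 16)
    (hε2 : Real.sqrt t * ε * C ≤ t / 512) (hu : u ≤ C * Real.sqrt n) (hc : c ≤ t / 128) :
    4 * K ^ 2 * t ^ 2 * n + (-(t * (Real.sqrt n / 2 - ε * Real.sqrt n) ^ 2 / 4) +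
      (Real.sqrt t * (ε * Real.sqrt n * u) + t / 2 * (ε * Real.sqrt n) ^ 2)) ≤ -c * n := by
  have hsn : Real.sqrt n ^ 2 = n := Real.sq_sqrt (by positivity)
  have h1 : Real.sqrt t * (ε * Real.sqrt n * u) ≤ t / 512 * n := by
    calc Real.sqrt t * (ε * Real.sqrt n * u)
        ≤ Real.sqrt t * (ε * Real.sqrt n * (C * Real.sqrt n)) := by gcongr
      _ = (Real.sqrt t * ε * C) * Real.sqrt n ^ 2 := by ring
      _ ≤ t / 512 * n := by rw [hsn]; gcongr
  have h2 : t / 2 * (ε * Real.sqrt n) ^ 2 ≤ t / 512 * n := by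
    have : ε ^ 2 ≤ 1 / 256 := by nlinarith
    calc t / 2 * (ε * Real.sqrt n) ^ 2 = t * n / 2 * ε ^ 2 := by rw [mul_pow, hsn]; ring
      _ ≤ t * n / 2 * (1 / 256) := by gcongr
      _ = _ := by ring
  have h3 : t / 64 * n ≤ t * (Real.sqrt n / 2 - ε * Real.sqrt n) ^ 2 / 4 := by
    have : 1 / 16 ≤ (1 / 2 - ε) ^ 2 := by nlinarith
    calc t / 64 * n = t * n / 4 * (1 / 16) := by ring
      _ ≤ t * n / 4 * (1 / 2 - ε) ^ 2 := by gcongr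
      _ = t * (1 / 2 - ε) ^ 2 * Real.sqrt n ^ 2 / 4 := by rw [hsn]; ring
      _ = _ := by ring
  have h4 : c * n ≤ t / 128 * n := by
    gcongr
  rw [hKtt]
  linarith

/-- The quantitative form of the result: the constants depend only on the subgaussian constant `K`
and on the lower bound `τ` for the probability of `‖x‖ ≥ √n / 2`. -/
lemma exists_fisher_constants {K τ : ℝ} (hK : 1 ≤ K) (hτ : 0 < τ) :
    ∃ a : ℝ, 1 ≤ a ∧ ∃ b ∈ Set.Ioo (0 : ℝ) 1, ∀ n : ℕ, 0 < n →
      ∀ μ : Measure (EuclideanSpace ℝ (Fin n)), IsProbabilityMeasure μ → MidPL μ →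
      (∀ v, ∫⁻ x, ENNReal.ofReal (Real.exp ⟪x, v⟫) ∂μ ≤
        ENNReal.ofReal (Real.exp (K * ‖v‖ ^ 2))) →
      ENNReal.ofReal τ ≤ μ {x | Real.sqrt n / 2 ≤ ‖x‖} →
      (μ.prod μ) {p | ⟪p.1, p.1⟫ ≤ ⟪p.1, p.2⟫} ≤ ENNReal.ofReal (a * b ^ n) := by
  have hK0 : 0 < K := by linarith
  set t : ℝ := 1 / (1024 * K ^ 2) with htdef
  have ht : 0 < t := by positivity
  have hKt : K ^ 2 * t = 1 / 1024 := by rw [htdef]; field_simp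
  have hKK : K ≤ K ^ 2 := by nlinarith
  have hKt1 : K * t ≤ 1 / 1024 := hKt ▸ mul_le_mul_of_nonneg_right hKK ht.le
  have ht1 : t ≤ 1 / 1024 := by nlinarith
  have hKtt : 4 * K ^ 2 * t ^ 2 = t / 256 := by linear_combination 4 * t * hKt
  set q : ℝ := 1 / (τ / 4) with hq
  have hq0 : 0 < q := by positivity
  set C : ℝ := 2 * Real.sqrt (1 + q) with hC
  have hC0 : 0 < C := by positivity
  have hC2 : C ^ 2 = 4 * (1 + q) := by
    rw [hC, mul_pow, Real.sq_sqrt (by positivity)]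
    norm_num
  set ε : ℝ := min (1 / 16) (Real.sqrt t / (512 * C)) with hε
  have hε0 : 0 < ε := by
    have : 0 < Real.sqrt t := Real.sqrt_pos.2 ht
    positivity
  have hε1 : ε ≤ 1 / 16 := min_le_left _ _
  have hε2 : Real.sqrt t * ε * C ≤ t / 512 := by
    have h1 : ε ≤ Real.sqrt t / (512 * C) := min_le_right _ _
    rw [le_div_iff₀ (by positivity)] at h1
    have h2 := mul_le_mul_of_nonneg_left h1 (Real.sqrt_nonneg t)
    rw [Real.mul_self_sqrt ht.le] at h2
    linarith
  set c : ℝ := min (t / 128) (ε ^ 2 / (4 * K)) with hc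
  have hc0 : 0 < c := by positivity
  refine ⟨q + 1, by linarith, Real.exp (-c), ⟨Real.exp_pos _, by simpa using hc0⟩, ?_⟩
  intro n hn μ hμ hPL hmgf hT
  have hn1 : (1 : ℝ) ≤ n := by exact_mod_cast hn
  have hsn : Real.sqrt n ^ 2 = n := Real.sq_sqrt (by positivity)
  have hsn0 : 0 ≤ Real.sqrt n := Real.sqrt_nonneg _
  have hrR : ε * Real.sqrt n ≤ Real.sqrt n / 2 := by nlinarith
  have hr : 0 ≤ ε * Real.sqrt n := by positivity
  obtain ⟨y, hy, hball⟩ := hPL.small_ball hK0.le hmgf ht.le (by linarith)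
    (by rw [hKtt]; linarith) hrR hτ hT
  have hynorm : ‖y‖ ≤ C * Real.sqrt n :=
    norm_le_of_exp_le hn1 hKt1 hq hq0 hC0 hC2 hy
  have hexp : 4 * K ^ 2 * t ^ 2 * n + (-(t * (Real.sqrt n / 2 - ε * Real.sqrt n) ^ 2 / 4) +
      (Real.sqrt t * (ε * Real.sqrt n * ‖y‖) + t / 2 * (ε * Real.sqrt n) ^ 2)) ≤ -c * n :=
    tilt_exponent_le hn1 ht hKtt hε0 hε1 hε2 hynorm (min_le_left _ _)
  refine (fisher_failure_le hK0 hmgf hr).trans ((add_le_add_left hball _).trans ?_)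
  rw [← ENNReal.ofReal_add (by positivity) (by positivity)]
  refine ENNReal.ofReal_le_ofReal ?_
  rw [← Real.exp_nat_mul, add_mul, one_mul, mul_comm (n : ℝ)]
  refine add_le_add ?_ (Real.exp_le_exp.2 ?_)
  · rw [div_eq_mul_one_div _ (τ / 4), mul_comm (Real.exp _) (1 / (τ / 4)), mul_assoc,
      ← Real.exp_add]
    gcongr
  · have : c * n ≤ ε ^ 2 / (4 * K) * n := by
      gcongr
      exact min_le_right _ _
    rw [mul_pow, hsn]
    have h' : ε ^ 2 * n / (4 * K) = ε ^ 2 / (4 * K) * n := by ring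
    linarith

end

theorem stmt_14 (B₂ : ℝ) (hB : 0 < B₂)
    (P : ∀ n : ℕ, Measure (EuclideanSpace ℝ (Fin n)))
    (hprob : ∀ n, IsProbabilityMeasure (P n))
    (ρ : ∀ n : ℕ, EuclideanSpace ℝ (Fin n) → ℝ)
    (hρ0 : ∀ n z, 0 ≤ ρ n z)
    (hPdef : ∀ n, P n = volume.withDensity (fun z => ENNReal.ofReal (ρ n z)))
    (hlc : ∀ n, IsLogConcaveDensity (ρ n))
    (hiso : ∀ n, IsIsotropicDensity (ρ n))
    (hpsi : ∀ n, IsPsiAlphaDensity 2 B₂ (ρ n)) :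
    ExpFisherSeparability P := by
  -- `(B₂² · 4)²` bounds the fourth moments of the one-dimensional marginals
  have hD : 0 < (B₂ ^ 2 * 4) ^ 2 := by positivity
  obtain ⟨a, ha, b, hb, hab⟩ := exists_fisher_constants (K := 18 * B₂ ^ 2 + 1)
    (τ := 1 / (8 * (B₂ ^ 2 * 4) ^ 2)) (by nlinarith) (by positivity)
  refine ⟨a, by linarith, b, hb, fun n => ?_⟩
  have := hprob n
  rcases Nat.eq_zero_or_pos n with rfl | hn
  · refine prob_le_one.trans ?_
    rw [pow_zero, mul_one, ENNReal.one_le_ofReal]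
    exact ha
  obtain ⟨hPL, htr⟩ := logConcave_transfer (hρ0 n) (hlc n) (hPdef n)
  have htr1 : ∀ φ : EuclideanSpace ℝ (Fin n) → ℝ, ∫ z, φ z ∂(P n) = ∫ z, ρ n z • φ z :=
    fun φ => htr φ
  have hmgf := psi_two_laplace hB hPL htr1 (htr _) (hiso n) (hpsi n)
  refine hab n hn (P n) this hPL (fun v => (hmgf v).trans ?_)
    (measure_norm_ge hn hD (fun θ hθ => ?_) fun θ hθ => ?_)
  · refine ENNReal.ofReal_le_ofReal (Real.exp_le_exp.2 ?_)
    nlinarith [sq_nonneg ‖v‖]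
  · have hi := hPL.integrable_pow θ 2
    simp only [sq_abs] at hi
    rw [← ofReal_integral_eq_lintegral_ofReal hi (.of_forall fun _ => sq_nonneg _), htr1]
    simp only [smul_eq_mul]
    rw [(hiso n).2 θ hθ, ENNReal.ofReal_one]
  · have h := psi_two_moments hPL htr1 (hiso n) (hpsi n) θ hθ 2 (by norm_num)
    norm_num at h ⊢
    exact h
end

section
/- Let {Pₙ, n = 1,2,…} and {P'ₙ, n = 1,2,…} be families of probability measures, where Pₙ and P'ₙ are probability measures on ℝⁿ. If the family {P'ₙ} has exponential Fisher separability and {P'ₙ} dominates {Pₙ}, then the family {Pₙ} has exponential Fisher separability. -/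
/-!
Domination `Pₙ ≤ C • P'ₙ` passes to product measures with constant `C²`, so the probability of
the failure event under `Pₙ × Pₙ` is at most `C² · a · bⁿ`: the base `b` is kept and the prefactor
`a` becomes `C² · a`.
-/

open MeasureTheory ProbabilityTheory Metric
open scoped RealInnerProductSpace ENNReal

/-- Setwise domination of `μ` by `c • ν` gives domination of `μ × μ` by `c² • (ν × ν)`, by applying
it to each section of the set and then to the outer integral. -/
lemma prod_self_le_of_dominated {α : Type*} [MeasurableSpace α] (μ ν : Measure α) [SFinite μ]
    [SFinite ν] (c : ℝ≥0∞) (h : ∀ S, MeasurableSet S → μ S ≤ c * ν S)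
    {T : Set (α × α)} (hT : MeasurableSet T) :
    (μ.prod μ) T ≤ c * (c * (ν.prod ν) T) := by
  have hle : μ ≤ c • ν := Measure.le_iff.2 fun S hS => by simpa using h S hS
  have hmeas : Measurable fun x => ν (Prod.mk x ⁻¹' T) := measurable_measure_prodMk_left hT
  rw [Measure.prod_apply hT, Measure.prod_apply hT]
  calc ∫⁻ x, μ (Prod.mk x ⁻¹' T) ∂μ
      ≤ ∫⁻ x, c * ν (Prod.mk x ⁻¹' T) ∂(c • ν) :=
        lintegral_mono' hle fun x => h _ (measurable_prodMk_left hT)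
    _ = c * (c * ∫⁻ x, ν (Prod.mk x ⁻¹' T) ∂ν) := by
        rw [lintegral_smul_measure, lintegral_const_mul _ hmeas, smul_eq_mul]

theorem stmt_17 (P P' : ∀ n : ℕ, Measure (EuclideanSpace ℝ (Fin n)))
    (hP : ∀ n, IsProbabilityMeasure (P n))
    (hP' : ∀ n, IsProbabilityMeasure (P' n))
    (hdom : ∃ C : ℝ, ∀ (n : ℕ) (S : Set (EuclideanSpace ℝ (Fin n))),
      MeasurableSet S → P n S ≤ ENNReal.ofReal C * P' n S)
    (hsep : ExpFisherSeparability P') :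
    ExpFisherSeparability P := by
  obtain ⟨C, hC⟩ := hdom
  obtain ⟨a, ha, b, hb, hab⟩ := hsep
  -- Total mass `1 ≤ C · 1` forces the constant to be positive.
  have hCpos : 0 < C := by
    by_contra hneg
    have h0 := hC 0 Set.univ MeasurableSet.univ
    rw [ENNReal.ofReal_of_nonpos (not_lt.1 hneg)] at h0
    simp at h0
  refine ⟨C * (C * a), by positivity, b, hb, fun n => ?_⟩
  have hT : MeasurableSet {p : EuclideanSpace ℝ (Fin n) × EuclideanSpace ℝ (Fin n) |
      ⟪p.1, p.1⟫ ≤ ⟪p.1, p.2⟫} :=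
    (isClosed_le (by fun_prop) (by fun_prop)).measurableSet
  calc _ ≤ ENNReal.ofReal C * (ENNReal.ofReal C * _) :=
        prod_self_le_of_dominated (P n) (P' n) _ (hC n) hT
    _ ≤ ENNReal.ofReal C * (ENNReal.ofReal C * ENNReal.ofReal (a * b ^ n)) := by
        gcongr
        exact hab n
    _ = ENNReal.ofReal (C * (C * a) * b ^ n) := by
        rw [← ENNReal.ofReal_mul hCpos.le, ← ENNReal.ofReal_mul hCpos.le]
        congr 1
        ring
end

section
/- Let {Pₙ, n = 1,2,…} be a family of probability measures, where Pₙ is a probability measure on ℝⁿ with density ρₙ, and suppose there exist a constant C > 0 and scalars σₙ > 0 such that ρₙ(x) ≤ C·γₙ(x) for all x ∈ ℝⁿ and all n, where γₙ is the density of the Gaussian distribution N(0, σₙ²·Iₙ) on ℝⁿ. Then the family {Pₙ} has exponential Fisher separability. -/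
/-!
On the bad event `⟪x, x⟫ ≤ ⟪x, y⟫` one has `‖x‖² + ‖y‖² ≥ ‖y - x‖² + 2‖x‖²`, so the product of
the two Gaussian bounds is at most `K² exp (-‖x‖² / σ²) exp (-‖y - x‖² / (2σ²))` with
`K = C (2πσ²)^(-n/2)`. By translation invariance its integral over `y` and then `x` is
`K² (2πσ²)^(n/2) (πσ²)^(n/2) = C² 2^(-n/2)`, so `a = C²` and `b = 2^(-1/2)` work.

The density is not assumed measurable; only the comparison `Pₙ ≤ Cγₙ · volume`, which follows from
monotonicity of `withDensity`, is used.
-/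

open MeasureTheory ProbabilityTheory Metric
open scoped RealInnerProductSpace ENNReal

lemma lintegral_exp_neg_mul_norm_sq (n : ℕ) {b : ℝ} (hb : 0 < b) :
    ∫⁻ z : EuclideanSpace ℝ (Fin n), ENNReal.ofReal (Real.exp (-b * ‖z‖ ^ 2))
      = ENNReal.ofReal ((Real.pi / b) ^ ((n : ℝ) / 2)) := by
  have h := GaussianFourier.integral_rexp_neg_mul_sq_norm (V := EuclideanSpace ℝ (Fin n)) hb
  rw [finrank_euclideanSpace_fin] at h
  have hpos : 0 < (Real.pi / b) ^ ((n : ℝ) / 2) := by have := Real.pi_pos; positivity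
  rw [← ofReal_integral_eq_lintegral_ofReal, h]
  · exact Integrable.of_integral_ne_zero (by rw [h]; exact hpos.ne')
  · exact Filter.Eventually.of_forall fun z => (Real.exp_pos _).le

/-- The Gaussian estimate in a fixed dimension, for any measure dominated by `K` times the
unnormalised Gaussian. -/
lemma prod_bad_event_le (n : ℕ) (P : Measure (EuclideanSpace ℝ (Fin n))) [SFinite P]
    {K s : ℝ} (hK : 0 ≤ K) (hs : 0 < s)
    (hP : P ≤ volume.withDensity
      (fun z => ENNReal.ofReal (K * Real.exp (-‖z‖ ^ 2 / (2 * s ^ 2))))) :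
    (P.prod P) {p | ⟪p.1, p.1⟫ ≤ ⟪p.1, p.2⟫} ≤
      ENNReal.ofReal (K ^ 2 * (Real.pi * s ^ 2) ^ ((n : ℝ) / 2) *
        (2 * Real.pi * s ^ 2) ^ ((n : ℝ) / 2)) := by
  have hpi := Real.pi_pos
  set g : EuclideanSpace ℝ (Fin n) → ℝ := fun z => K * Real.exp (-‖z‖ ^ 2 / (2 * s ^ 2)) with hg
  have hg0 : ∀ z, 0 ≤ g z := fun z => by positivity
  have hgm : Measurable fun z => ENNReal.ofReal (g z) := by fun_prop
  set S : Set (EuclideanSpace ℝ (Fin n) × EuclideanSpace ℝ (Fin n)) :=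
    {p | ⟪p.1, p.1⟫ ≤ ⟪p.1, p.2⟫} with hS
  have hSm : MeasurableSet S :=
    (isClosed_le (by fun_prop) (by fun_prop)).measurableSet
  set Q := (volume : Measure (EuclideanSpace ℝ (Fin n))).withDensity
    (fun z => ENNReal.ofReal (g z)) with hQ
  have key : ∀ x y, (x, y) ∈ S → g x * g y ≤
      (K ^ 2 * Real.exp (-(1 / s ^ 2) * ‖x‖ ^ 2)) *
        Real.exp (-(1 / (2 * s ^ 2)) * ‖y - x‖ ^ 2) := by
    intro x y hxy
    have h1 : ‖x‖ ^ 2 ≤ ⟪x, y⟫ := by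
      have h : ⟪x, x⟫ ≤ ⟪x, y⟫ := hxy
      rwa [real_inner_self_eq_norm_sq] at h
    have h2 : ‖y - x‖ ^ 2 + 2 * ‖x‖ ^ 2 ≤ ‖x‖ ^ 2 + ‖y‖ ^ 2 := by
      rw [norm_sub_sq_real, real_inner_comm]; linarith
    have e1 : g x * g y = K ^ 2 * Real.exp (-(‖x‖ ^ 2 + ‖y‖ ^ 2) / (2 * s ^ 2)) := by
      rw [show -(‖x‖ ^ 2 + ‖y‖ ^ 2) / (2 * s ^ 2) =
        -‖x‖ ^ 2 / (2 * s ^ 2) + -‖y‖ ^ 2 / (2 * s ^ 2) by ring, Real.exp_add]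
      simp only [hg]; ring
    rw [e1, mul_assoc, ← Real.exp_add,
      show -(1 / s ^ 2) * ‖x‖ ^ 2 + -(1 / (2 * s ^ 2)) * ‖y - x‖ ^ 2 =
        -(‖y - x‖ ^ 2 + 2 * ‖x‖ ^ 2) / (2 * s ^ 2) by field_simp; ring]
    gcongr
  have inner_le : ∀ x, ENNReal.ofReal (g x) * Q (Prod.mk x ⁻¹' S) ≤
      ENNReal.ofReal (K ^ 2 * Real.exp (-(1 / s ^ 2) * ‖x‖ ^ 2)) *
        ENNReal.ofReal ((2 * Real.pi * s ^ 2) ^ ((n : ℝ) / 2)) := by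
    intro x
    have hSx : MeasurableSet (Prod.mk x ⁻¹' S) := measurable_prodMk_left hSm
    rw [hQ, withDensity_apply _ hSx, ← lintegral_const_mul _ hgm]
    calc ∫⁻ y in Prod.mk x ⁻¹' S, ENNReal.ofReal (g x) * ENNReal.ofReal (g y)
        ≤ ∫⁻ y in Prod.mk x ⁻¹' S,
            ENNReal.ofReal (K ^ 2 * Real.exp (-(1 / s ^ 2) * ‖x‖ ^ 2)) *
            ENNReal.ofReal (Real.exp (-(1 / (2 * s ^ 2)) * ‖y - x‖ ^ 2)) := by
          refine setLIntegral_mono' hSx fun y hy => ?_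
          rw [← ENNReal.ofReal_mul (hg0 x), ← ENNReal.ofReal_mul (by positivity)]
          exact ENNReal.ofReal_le_ofReal (key x y hy)
      _ ≤ ∫⁻ y, ENNReal.ofReal (K ^ 2 * Real.exp (-(1 / s ^ 2) * ‖x‖ ^ 2)) *
            ENNReal.ofReal (Real.exp (-(1 / (2 * s ^ 2)) * ‖y - x‖ ^ 2)) :=
          setLIntegral_le_lintegral _ _
      _ = _ := by
          rw [lintegral_const_mul _ (by fun_prop),
            lintegral_sub_right_eq_self
              (fun y => ENNReal.ofReal (Real.exp (-(1 / (2 * s ^ 2)) * ‖y‖ ^ 2))) x,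
            lintegral_exp_neg_mul_norm_sq n (by positivity)]
          congr 3
          field_simp
  rw [Measure.prod_apply hSm]
  calc ∫⁻ x, P (Prod.mk x ⁻¹' S) ∂P
      ≤ ∫⁻ x, Q (Prod.mk x ⁻¹' S) ∂Q := lintegral_mono' hP fun x => hP _
    _ = ∫⁻ x, ENNReal.ofReal (g x) * Q (Prod.mk x ⁻¹' S) := by
        rw [hQ, lintegral_withDensity_eq_lintegral_mul _ hgm (measurable_measure_prodMk_left hSm)]
        rfl
    _ ≤ ∫⁻ x, ENNReal.ofReal (K ^ 2 * Real.exp (-(1 / s ^ 2) * ‖x‖ ^ 2)) *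
          ENNReal.ofReal ((2 * Real.pi * s ^ 2) ^ ((n : ℝ) / 2)) := lintegral_mono inner_le
    _ = _ := by
        rw [lintegral_mul_const _ (by fun_prop)]
        simp_rw [ENNReal.ofReal_mul (sq_nonneg K)]
        rw [lintegral_const_mul _ (by fun_prop), lintegral_exp_neg_mul_norm_sq n (by positivity),
          ← ENNReal.ofReal_mul (by positivity), ← ENNReal.ofReal_mul (by positivity)]
        congr 4
        field_simp

theorem stmt_18 (P : ∀ n : ℕ, Measure (EuclideanSpace ℝ (Fin n)))
    (hprob : ∀ n, IsProbabilityMeasure (P n))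
    (ρ : ∀ n : ℕ, EuclideanSpace ℝ (Fin n) → ℝ)
    (hρ0 : ∀ n z, 0 ≤ ρ n z)
    (hPdef : ∀ n, P n = volume.withDensity (fun z => ENNReal.ofReal (ρ n z)))
    (C : ℝ) (hC : 0 < C) (σ : ℕ → ℝ) (hσ : ∀ n, 0 < σ n)
    (hbound : ∀ n z, ρ n z ≤
      C * ((2 * Real.pi * σ n ^ 2) ^ (-(n : ℝ) / 2) *
        Real.exp (-‖z‖ ^ 2 / (2 * σ n ^ 2)))) :
    ExpFisherSeparability P := by
  have hpi := Real.pi_pos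
  refine ⟨C ^ 2, by positivity, (2 : ℝ) ^ (-(1 / 2) : ℝ), ⟨by positivity, ?_⟩, fun n => ?_⟩
  · exact Real.rpow_lt_one_of_one_lt_of_neg (by norm_num) (by norm_num)
  have hs := hσ n
  have := hprob n
  have hle : P n ≤ volume.withDensity (fun z => ENNReal.ofReal
      (C * (2 * Real.pi * σ n ^ 2) ^ (-(n : ℝ) / 2) * Real.exp (-‖z‖ ^ 2 / (2 * σ n ^ 2)))) := by
    rw [hPdef n]
    refine withDensity_mono (Filter.Eventually.of_forall fun z => ?_)
    exact ENNReal.ofReal_le_ofReal (by rw [mul_assoc]; exact hbound n z)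
  refine (prod_bad_event_le n (P n) (by positivity) hs hle).trans (le_of_eq ?_)
  congr 1
  have hb : ((2 : ℝ) ^ (-(1 / 2) : ℝ)) ^ n = ((2 : ℝ) ^ ((n : ℝ) / 2))⁻¹ := by
    rw [← Real.rpow_natCast, ← Real.rpow_mul (by norm_num), ← Real.rpow_neg (by norm_num)]
    congr 1
    ring
  rw [hb, show 2 * Real.pi * σ n ^ 2 = 2 * (Real.pi * σ n ^ 2) by ring, neg_div,
    Real.rpow_neg (by positivity), Real.mul_rpow (by norm_num) (by positivity)]
  have h1 : 0 < (2 : ℝ) ^ ((n : ℝ) / 2) := by positivity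
  have h2 : 0 < (Real.pi * σ n ^ 2) ^ ((n : ℝ) / 2) := by positivity
  field_simp
end
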